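/- arXiv:2604.23050 — 7 statements merged into one kernel-verified Lean document; each statement's English description precedes it below -/
import Mathlib

section
/- Let f ∈ ℤ[x] be a polynomial of degree d ≥ 2 with positive leading coefficient having at least two distinct roots in an algebraic closure of ℚ, let m ≥ 2 be an integer, and let F(x) = f(x)^m. Then the set of lattice points visible along F has density 1, i.e., #Visible_F(N)/N² tends to 1 as N → ∞. -/
open Polynomial Filter

/-- A lattice point `(a, h)` (with `a, h` positive integers) is *visible along* the
polynomial `F ∈ ℤ[x]` if there is a rational `t` with `h = t·F(a)` and `a` is the
smallest positive integer `u` such that `t·F(u)` is a positive integer. -/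
def VisibleAlong (F : Polynomial ℤ) (a h : ℤ) : Prop :=
  ∃ t : ℚ, (h : ℚ) = t * ((F.eval a : ℤ) : ℚ) ∧
    ∀ u : ℤ, 0 < u → (∃ k : ℤ, 0 < k ∧ (k : ℚ) = t * ((F.eval u : ℤ) : ℚ)) → a ≤ u

/-- The set of lattice points in `[1,N]²` that are visible along `F`. -/
def visibleSet (F : Polynomial ℤ) (N : ℕ) : Set (ℤ × ℤ) :=
  {p | 1 ≤ p.1 ∧ p.1 ≤ (N : ℤ) ∧ 1 ≤ p.2 ∧ p.2 ≤ (N : ℤ) ∧ VisibleAlong F p.1 p.2}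

/-!
If `(a, h)` is invisible along `f ^ m`, some positive `u < a` satisfies `f u = r * f a` with
`h * r ^ m` a positive integer, so the `m`-th power of the denominator of `r` divides `h`. As
`m ≥ 2`, a denominator larger than `K` forces `h` to be divisible by the square of an integer
larger than `K`, which happens for a proportion at most `1 / K` of all `h`. Up to a bounded set of
`a` we have `|r| < 1`, so only finitely many `r` of denominator at most `K` remain, and it suffices
to show that for a fixed rational `r ∉ {0, 1}` the `a` for which `r * f a` is a value of `f` have
density zero.

To see this, let `d` be the degree of `f` and `μ` the mean of its roots. The `d`-th root of `f x`,
normalized, is `x - μ + o(1)`, so a solution of `f y = r * f x` satisfies `y = ρ * x + c + o(1)`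
with `ρ ^ d = r` and `c` constant. If infinitely many solutions `x` came with a second solution at
the same distance `g`, then integrality would make `ρ` rational and `y = ρ * x + e` exact for
infinitely many `x`, so `f (ρ * X + e) = r * f` as polynomials. The roots of `f` would then be
permuted by an affine map of ratio `ρ`, not a root of unity, which is impossible for a finite set
with at least two elements. Hence the gaps between solutions `x` tend to infinity.
-/

open Asymptotics Topology

theorem abs_sub_mul_pow_le_abs_pow_sub_pow {R : Type*} [CommRing R] [LinearOrder R]
    [IsStrictOrderedRing R] {s t : R} (hs : 0 ≤ s) (ht : 0 ≤ t) {d : ℕ} (hd : d ≠ 0) :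
    |s - t| * s ^ (d - 1) ≤ |s ^ d - t ^ d| := by
  rw [← (Commute.all s t).mul_geom_sum₂ d, abs_mul]
  gcongr
  have hterm := Finset.single_le_sum (f := fun i => s ^ i * t ^ (d - 1 - i))
    (fun _ _ => by positivity) (Finset.mem_range.2 (Nat.sub_one_lt hd))
  rw [Nat.sub_self, pow_zero, mul_one] at hterm
  exact hterm.trans (le_abs_self _)

section RootMean

variable {K : Type*} [Field K]

/-- The arithmetic mean of the roots of `f` in a splitting field, read off the two highest
coefficients by Vieta. Centring `f` there removes its second highest coefficient. -/
noncomputable def rootMean (f : K[X]) : K := -f.nextCoeff / (f.natDegree * f.leadingCoeff)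

theorem degree_sub_leadingCoeff_mul_X_sub_rootMean_pow_lt [CharZero K] {f : K[X]}
    (hf : 0 < f.natDegree) :
    (f - C f.leadingCoeff * (X - C (rootMean f)) ^ f.natDegree).degree <
      ((f.natDegree - 1 : ℕ) : WithBot ℕ) := by
  have hlead : f.leadingCoeff ≠ 0 := leadingCoeff_ne_zero.2 (ne_zero_of_natDegree_gt hf)
  have hdeg : (f.natDegree : K) ≠ 0 := Nat.cast_ne_zero.2 hf.ne'
  rw [degree_lt_iff_coeff_zero]
  intro k hk
  rw [coeff_sub, coeff_C_mul, sub_eq_add_neg X, ← C_neg, coeff_X_add_C_pow]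
  rcases lt_trichotomy k f.natDegree with hlt | rfl | hgt
  · obtain ⟨n, hn⟩ : ∃ n, f.natDegree = n + 1 := Nat.exists_eq_add_one.2 hf
    obtain rfl : k = n := by omega
    rw [rootMean, nextCoeff_of_natDegree_pos hf, hn, Nat.choose_succ_self_right,
      Nat.add_sub_cancel, Nat.add_sub_cancel_left, pow_one]
    rw [hn] at hdeg
    field_simp
    ring
  · simp
  · simp [coeff_eq_zero_of_natDegree_lt hgt, Nat.choose_eq_zero_of_lt hgt]

end RootMean

section RealPolynomial

variable {f : ℝ[X]}

theorem tendsto_eval_div_leadingCoeff_atTop (hf : 0 < f.natDegree) :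
    Tendsto (fun x => f.eval x / f.leadingCoeff) atTop atTop := by
  have hlead : f.leadingCoeff ≠ 0 := leadingCoeff_ne_zero.2 (ne_zero_of_natDegree_gt hf)
  have hmonic := tendsto_atTop_of_leadingCoeff_nonneg (C f.leadingCoeff⁻¹ * f)
    (by rwa [degree_C_mul (inv_ne_zero hlead), ← natDegree_pos_iff_degree_pos])
    (by simp [inv_mul_cancel₀ hlead])
  simpa [div_eq_inv_mul] using hmonic

/-- The `d`-th root of the monic normalization of a real polynomial of degree `d`, a junk value
where that normalization is negative. As `x → ∞` it is a translation up to `o(1)`, so it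
straightens relations between values of `f` into affine relations between arguments. -/
noncomputable def normalizedRoot (f : ℝ[X]) (x : ℝ) : ℝ :=
  (f.eval x / f.leadingCoeff) ^ (f.natDegree : ℝ)⁻¹

theorem tendsto_normalizedRoot_sub (hf : 0 < f.natDegree) :
    Tendsto (fun x => normalizedRoot f x - x) atTop (𝓝 (-rootMean f)) := by
  set μ := rootMean f
  have hlead : f.leadingCoeff ≠ 0 := leadingCoeff_ne_zero.2 (ne_zero_of_natDegree_gt hf)
  have hremainder : Tendsto (fun x => |(f.eval x - f.leadingCoeff * (x - μ) ^ f.natDegree) /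
      (x - μ) ^ (f.natDegree - 1) / f.leadingCoeff|) atTop (𝓝 0) := by
    have hdeg : (f - C f.leadingCoeff * (X - C μ) ^ f.natDegree).degree <
        ((X - C μ) ^ (f.natDegree - 1)).degree := by
      rw [degree_pow, degree_X_sub_C, nsmul_one]
      exact degree_sub_leadingCoeff_mul_X_sub_rootMean_pow_lt hf
    simpa using ((div_tendsto_atTop_zero_of_degree_lt _ _ hdeg).div_const f.leadingCoeff).abs
  rw [tendsto_iff_norm_sub_tendsto_zero]
  refine squeeze_zero' (Eventually.of_forall fun _ => norm_nonneg _) ?_ hremainder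
  filter_upwards [eventually_gt_atTop μ,
    (tendsto_eval_div_leadingCoeff_atTop hf).eventually_ge_atTop 0] with x hx hnonneg
  have hpos : 0 < x - μ := sub_pos.2 hx
  have hpow : normalizedRoot f x ^ f.natDegree = f.eval x / f.leadingCoeff :=
    Real.rpow_inv_natCast_pow hnonneg hf.ne'
  have hbound := abs_sub_mul_pow_le_abs_pow_sub_pow hpos.le
    (show 0 ≤ normalizedRoot f x from Real.rpow_nonneg hnonneg _) hf.ne'
  rw [hpow, ← le_div_iff₀ (by positivity)] at hbound
  calc ‖normalizedRoot f x - x - -μ‖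
      = |x - μ - normalizedRoot f x| := by rw [Real.norm_eq_abs, abs_sub_comm]; ring_nf
    _ ≤ |(x - μ) ^ f.natDegree - f.eval x / f.leadingCoeff| / (x - μ) ^ (f.natDegree - 1) := hbound
    _ = |(f.eval x - f.leadingCoeff * (x - μ) ^ f.natDegree) /
          (x - μ) ^ (f.natDegree - 1) / f.leadingCoeff| := by
      rw [div_right_comm, sub_div, mul_div_cancel_left₀ _ hlead, abs_div,
        abs_of_pos (pow_pos hpos _), abs_sub_comm]

theorem pos_of_eval_eq_mul_eval (hf : 0 < f.natDegree) {r : ℝ} {ι : Type*} {l : Filter ι}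
    [l.NeBot] {x y : ι → ℝ} (hx : Tendsto x l atTop) (hy : Tendsto y l atTop)
    (heval : ∀ᶠ i in l, f.eval (y i) = r * f.eval (x i)) : 0 < r := by
  have hpos := (tendsto_eval_div_leadingCoeff_atTop hf).eventually_gt_atTop 0
  obtain ⟨i, hi, hxi, hyi⟩ := (heval.and ((hx.eventually hpos).and (hy.eventually hpos))).exists
  rw [hi, mul_div_assoc] at hyi
  exact pos_of_mul_pos_left hyi hxi.le

theorem tendsto_sub_mul_of_eval_eq_mul_eval (hf : 0 < f.natDegree) {r : ℝ} (hr : 0 ≤ r)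
    {ι : Type*} {l : Filter ι} {x y : ι → ℝ} (hx : Tendsto x l atTop) (hy : Tendsto y l atTop)
    (heval : ∀ᶠ i in l, f.eval (y i) = r * f.eval (x i)) :
    Tendsto (fun i => y i - r ^ (f.natDegree : ℝ)⁻¹ * x i) l
      (𝓝 ((1 - r ^ (f.natDegree : ℝ)⁻¹) * rootMean f)) := by
  have hlim := (((tendsto_normalizedRoot_sub hf).comp hx).const_mul
    (r ^ (f.natDegree : ℝ)⁻¹)).sub ((tendsto_normalizedRoot_sub hf).comp hy)
  convert hlim.congr' _ using 2
  · ring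
  filter_upwards [heval, hx.eventually
    ((tendsto_eval_div_leadingCoeff_atTop hf).eventually_ge_atTop 0)] with i hi hnonneg
  have hroot : normalizedRoot f (y i) = r ^ (f.natDegree : ℝ)⁻¹ * normalizedRoot f (x i) := by
    rw [normalizedRoot, hi, mul_div_assoc, Real.mul_rpow hr hnonneg, normalizedRoot]
  simp only [Function.comp_apply, hroot]
  ring

theorem exists_strictMonoOn_abs_eval_intCast (hf : 0 < f.natDegree) :
    ∃ R : ℤ, StrictMonoOn (fun n : ℤ => |f.eval (n : ℝ)|) (Set.Ici R) := by
  have hlead : f.leadingCoeff ≠ 0 := leadingCoeff_ne_zero.2 (ne_zero_of_natDegree_gt hf)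
  have hnear := (tendsto_normalizedRoot_sub hf).eventually (Metric.ball_mem_nhds _ one_half_pos)
  have hnonneg := (tendsto_eval_div_leadingCoeff_atTop hf).eventually_ge_atTop 0
  obtain ⟨R, hR⟩ := eventually_atTop.1
    (tendsto_intCast_atTop_atTop.eventually (hnear.and hnonneg))
  refine ⟨R, fun u hu a ha hua => ?_⟩
  have hcast : (u : ℝ) + 1 ≤ a := mod_cast hua
  have hroot : normalizedRoot f u < normalizedRoot f a := by
    have hu' := abs_lt.1 (hR u hu).1
    have ha' := abs_lt.1 (hR a ha).1
    linarith [hu'.2, ha'.1]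
  have heval : f.eval (u : ℝ) / f.leadingCoeff < f.eval (a : ℝ) / f.leadingCoeff :=
    (Real.rpow_lt_rpow_iff (hR u hu).2 (hR a ha).2 (by positivity)).1 hroot
  have habs : |f.eval (u : ℝ) / f.leadingCoeff| < |f.eval (a : ℝ) / f.leadingCoeff| := by
    rwa [abs_of_nonneg (hR u hu).2, abs_of_nonneg (hR a ha).2]
  rwa [abs_div, abs_div, div_lt_div_iff_of_pos_right (abs_pos.2 hlead)] at habs

theorem eventually_forall_abs_eval_intCast_lt (hf : 0 < f.natDegree) :
    ∀ᶠ a : ℤ in atTop, ∀ u : ℤ, 0 < u → u < a → |f.eval (u : ℝ)| < |f.eval (a : ℝ)| := by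
  obtain ⟨R, hR⟩ := exists_strictMonoOn_abs_eval_intCast hf
  have hlim : Tendsto (fun a : ℤ => |f.eval (a : ℝ)|) atTop atTop :=
    (abs_tendsto_atTop f (natDegree_pos_iff_degree_pos.1 hf)).comp tendsto_intCast_atTop_atTop
  have hsmall : ∀ᶠ a : ℤ in atTop, ∀ u ∈ Finset.Ioo 0 R, |f.eval (u : ℝ)| < |f.eval (a : ℝ)| :=
    (eventually_all_finset _).2 fun _ _ => hlim.eventually_gt_atTop _
  filter_upwards [hsmall, eventually_ge_atTop R] with a ha hRa u hu hua
  rcases lt_or_ge u R with huR | huR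
  · exact ha u (Finset.mem_Ioo.2 ⟨hu, huR⟩)
  · exact hR huR hRa hua

end RealPolynomial

section Density

variable {S T : Set ℤ}

/-- The counting function of `S`: its number of elements in `[1, N]`. -/
noncomputable def countUpTo (S : Set ℤ) (N : ℕ) : ℕ := (S ∩ Set.Icc 1 (N : ℤ)).ncard

/-- `S` has natural density zero among the positive integers; its elements `≤ 0` are ignored. -/
def DensityZero (S : Set ℤ) : Prop :=
  (fun N => (countUpTo S N : ℝ)) =o[atTop] fun N : ℕ => (N : ℝ)

theorem countUpTo_mono (h : S ⊆ T) (N : ℕ) : countUpTo S N ≤ countUpTo T N :=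
  Set.ncard_le_ncard (Set.inter_subset_inter_left _ h) ((Set.finite_Icc _ _).inter_of_right _)

theorem countUpTo_union_le (S T : Set ℤ) (N : ℕ) :
    countUpTo (S ∪ T) N ≤ countUpTo S N + countUpTo T N := by
  rw [countUpTo, Set.union_inter_distrib_right]
  exact Set.ncard_union_le _ _

theorem densityZero_iff :
    DensityZero S ↔ ∀ ε : ℝ, 0 < ε → ∀ᶠ N : ℕ in atTop, (countUpTo S N : ℝ) ≤ ε * N := by
  simp [DensityZero, isLittleO_iff]

theorem DensityZero.union (hS : DensityZero S) (hT : DensityZero T) : DensityZero (S ∪ T) := by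
  refine IsBigO.trans_isLittleO (.of_bound' (.of_forall fun N => ?_)) (IsLittleO.add hS hT)
  rw [Real.norm_natCast]
  exact le_trans (mod_cast countUpTo_union_le S T N) (le_abs_self _)

theorem densityZero_empty : DensityZero ∅ := by
  simp [DensityZero, countUpTo]

theorem densityZero_biUnion {ι : Type*} {s : Set ι} (hs : s.Finite) {S : ι → Set ℤ}
    (hS : ∀ i ∈ s, DensityZero (S i)) : DensityZero (⋃ i ∈ s, S i) := by
  induction s, hs using Set.Finite.induction_on with
  | empty => simpa using densityZero_empty
  | insert _ _ ih =>
    rw [Set.biUnion_insert]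
    exact (hS _ (Set.mem_insert _ _)).union (ih fun i hi => hS i (Set.mem_insert_of_mem _ hi))

theorem densityZero_of_bddAbove (hS : BddAbove S) : DensityZero S := by
  obtain ⟨M, hM⟩ := hS
  have hcount : ∀ N, countUpTo S N ≤ (Set.Icc 1 M).ncard := fun N =>
    Set.ncard_le_ncard fun x hx => ⟨hx.2.1, hM hx.1⟩
  refine densityZero_iff.2 fun ε hε => ?_
  have hlarge := (tendsto_natCast_atTop_atTop (R := ℝ)).const_mul_atTop hε
  filter_upwards [hlarge.eventually_ge_atTop ((Set.Icc 1 M).ncard : ℝ)] with N hN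
  exact le_trans (mod_cast hcount N) hN

theorem densityZero_setOf_not {p : ℤ → Prop} (hp : ∀ᶠ a in atTop, p a) :
    DensityZero {a | ¬ p a} := by
  obtain ⟨A, hA⟩ := eventually_atTop.1 hp
  exact densityZero_of_bddAbove ⟨A, fun a ha => le_of_not_ge fun h => ha (hA a h)⟩

theorem countUpTo_le_of_pairwise {G : ℕ} (hG : 0 < G)
    (hS : S.Pairwise fun x x' => (G : ℤ) ≤ |x' - x|) (N : ℕ) :
    countUpTo S N ≤ N / G + 1 := by
  have hG' : (0 : ℤ) < G := mod_cast hG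
  have hcard : (Set.Icc (0 : ℤ) (N / G : ℕ)).ncard = N / G + 1 := by
    rw [← Finset.coe_Icc, Set.ncard_coe_finset, Int.card_Icc, sub_zero]
    exact Int.toNat_natCast (N / G + 1)
  rw [← hcard]
  -- Elements at distance at least `G` lie in different blocks `[G * j, G * (j + 1))`.
  refine Set.ncard_le_ncard_of_injOn (fun x => x / (G : ℤ)) (fun x hx => ?_) ?_
  · rw [Set.mem_Icc, Int.natCast_ediv]
    exact ⟨Int.ediv_nonneg (by linarith [hx.2.1]) hG'.le, Int.ediv_le_ediv hG' hx.2.2⟩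
  · intro x hx x' hx' hblock
    by_contra hne
    have hgap : (G : ℤ) ≤ |x' - x| := hS hx.1 hx'.1 hne
    have hx_split := Int.mul_ediv_add_emod x G
    have hx'_split := Int.mul_ediv_add_emod x' G
    rw [show x / (G : ℤ) = x' / G from hblock] at hx_split
    have := Int.emod_nonneg x hG'.ne'
    have := Int.emod_nonneg x' hG'.ne'
    have := Int.emod_lt_of_pos x hG'
    have := Int.emod_lt_of_pos x' hG'
    rcases le_abs.1 hgap with h | h <;> omega

theorem exists_pairwise_le_abs_sub_of_eventually_add_notMem
    (hS : ∀ g > 0, ∀ᶠ x in atTop, x ∈ S → x + g ∉ S) (G : ℤ) :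
    ∃ A, (S ∩ Set.Ici A).Pairwise fun x x' => G ≤ |x' - x| := by
  obtain ⟨A, hA⟩ := eventually_atTop.1 <| (eventually_all_finset (Finset.Ioo 0 G)).2
    fun g hg => hS g (Finset.mem_Ioo.1 hg).1
  have hgap : ∀ x ∈ S ∩ Set.Ici A, ∀ x' ∈ S, x < x' → G ≤ x' - x := by
    intro x hx x' hx' hlt
    by_contra! hclose
    exact hA x hx.2 (x' - x) (Finset.mem_Ioo.2 ⟨sub_pos.2 hlt, hclose⟩) hx.1 (by simpa)
  refine ⟨A, fun x hx x' hx' hne => ?_⟩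
  rcases lt_or_gt_of_ne hne with h | h
  · exact (hgap x hx x' hx'.1 h).trans (le_abs_self _)
  · rw [abs_sub_comm]
    exact (hgap x' hx' x hx.1 h).trans (le_abs_self _)

theorem densityZero_of_eventually_add_notMem
    (hS : ∀ g > 0, ∀ᶠ x in atTop, x ∈ S → x + g ∉ S) : DensityZero S := by
  refine densityZero_iff.2 fun ε hε => ?_
  obtain ⟨G, hG⟩ := exists_nat_gt (3 / ε)
  have hG0 : (0 : ℝ) < G := (div_pos three_pos hε).trans hG
  obtain ⟨A, hsep⟩ := exists_pairwise_le_abs_sub_of_eventually_add_notMem hS G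
  have hlarge := (tendsto_natCast_atTop_atTop (R := ℝ)).const_mul_atTop (div_pos hε three_pos)
  filter_upwards [densityZero_iff.1 (densityZero_of_bddAbove (bddAbove_Iio (a := A))) (ε / 3)
    (by positivity), hlarge.eventually_ge_atTop 1] with N hsmall hone
  have hsplit : countUpTo S N ≤ countUpTo (Set.Iio A) N + countUpTo (S ∩ Set.Ici A) N := by
    refine (countUpTo_mono (fun x hx => ?_) N).trans (countUpTo_union_le _ _ N)
    exact (lt_or_ge x A).imp id fun h => ⟨hx, h⟩
  have hblocks : (N : ℝ) / G ≤ ε / 3 * N := by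
    rw [div_lt_iff₀ hε] at hG
    rw [div_le_iff₀ hG0]
    nlinarith [Nat.cast_nonneg (α := ℝ) N]
  calc (countUpTo S N : ℝ) ≤ countUpTo (Set.Iio A) N + (N / G + 1 : ℕ) := mod_cast hsplit.trans
        (Nat.add_le_add_left (countUpTo_le_of_pairwise (mod_cast hG0) hsep N) _)
    _ ≤ ε / 3 * N + (ε / 3 * N + ε / 3 * N) := by
      push_cast
      gcongr
      exact Nat.cast_div_le.trans hblocks
    _ = ε * N := by ring

end Density

section SquareDivisors

theorem countUpTo_setOf_dvd_le {r : ℤ} (hr : 0 < r) (N : ℕ) :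
    (countUpTo {h | r ∣ h} N : ℝ) ≤ N / r := by
  have hcount : countUpTo {h | r ∣ h} N = (Finset.Ioc 0 (N : ℤ) |>.filter (r ∣ ·)).card := by
    rw [countUpTo, ← Set.ncard_coe_finset]
    congr 1
    ext h
    simp [Order.one_le_iff_pos, and_comm]
  have hfloor : (countUpTo {h | r ∣ h} N : ℤ) ≤ ⌊(N / r : ℚ)⌋ := by
    have hnonneg : (0 : ℚ) ≤ N / r := div_nonneg N.cast_nonneg (mod_cast hr.le)
    rw [hcount, Int.Ioc_filter_dvd_card _ _ hr]
    simp [Int.floor_nonneg.2 hnonneg]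
  exact_mod_cast Int.le_floor.1 hfloor

/-- The integers divisible by the square of some integer greater than `K`. They contain every
ordinate of an invisible point whose ratio of values has denominator greater than `K`. -/
def largeSquareMultiples (K : ℕ) : Set ℤ := {h | ∃ q : ℕ, K < q ∧ (q : ℤ) ^ 2 ∣ h}

theorem countUpTo_largeSquareMultiples_le {K : ℕ} (hK : K ≠ 0) (N : ℕ) :
    (countUpTo (largeSquareMultiples K) N : ℝ) ≤ N / K := by
  have hcover : largeSquareMultiples K ∩ Set.Icc 1 (N : ℤ) ⊆
      ⋃ q ∈ Finset.Ioc K (max K N), {h | (q : ℤ) ^ 2 ∣ h} ∩ Set.Icc 1 (N : ℤ) := by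
    rintro h ⟨⟨q, hKq, hdvd⟩, hh⟩
    have hqN : q ^ 2 ≤ N := by exact_mod_cast (Int.le_of_dvd hh.1 hdvd).trans hh.2
    have hq : q ≤ max K N := le_max_of_le_right ((Nat.le_self_pow two_ne_zero q).trans hqN)
    exact Set.mem_biUnion (Finset.mem_Ioc.2 ⟨hKq, hq⟩) ⟨hdvd, hh⟩
  have hcount : countUpTo (largeSquareMultiples K) N ≤
      ∑ q ∈ Finset.Ioc K (max K N), countUpTo {h | (q : ℤ) ^ 2 ∣ h} N :=
    (Set.ncard_le_ncard hcover (Set.toFinite _)).trans (Finset.set_ncard_biUnion_le _ _)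
  calc (countUpTo (largeSquareMultiples K) N : ℝ)
      ≤ ∑ q ∈ Finset.Ioc K (max K N), (countUpTo {h | (q : ℤ) ^ 2 ∣ h} N : ℝ) :=
        mod_cast hcount
    _ ≤ ∑ q ∈ Finset.Ioc K (max K N), N * ((q : ℝ) ^ 2)⁻¹ :=
        Finset.sum_le_sum fun q hq => by
          have hq0 : (0 : ℤ) < q := mod_cast (Finset.mem_Ioc.1 hq).1.pos
          simpa [div_eq_mul_inv] using countUpTo_setOf_dvd_le (pow_pos hq0 2) N
    _ ≤ N * ((K : ℝ)⁻¹ - ((max K N : ℕ) : ℝ)⁻¹) := by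
        rw [← Finset.mul_sum]
        gcongr
        exact sum_Ioc_inv_sq_le_sub hK (le_max_left _ _)
    _ ≤ N / K := by
        rw [div_eq_mul_inv]
        gcongr
        exact sub_le_self _ (by positivity)

end SquareDivisors

section AffineSelfSimilarity

variable {R : Type*} [CommRing R] [IsDomain R]

theorem subsingleton_of_mapsTo_affine {s : Set R} (hs : s.Finite) {L e : R}
    (hL : Function.Injective fun n : ℕ => L ^ n) (hmaps : Set.MapsTo (fun z => L * z + e) s s) :
    s.Subsingleton := by
  intro α hα β hβ
  by_contra hne
  -- The differences of elements of `s` are stable under multiplication by `L`.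
  have hdiff : ∀ n : ℕ, L ^ n * (α - β) ∈ Set.image2 (· - ·) s s := by
    intro n
    induction n with
    | zero => exact ⟨α, hα, β, hβ, by simp⟩
    | succ n ih =>
      obtain ⟨z, hz, w, hw, hzw : z - w = _⟩ := ih
      exact ⟨_, hmaps hz, _, hmaps hw, by rw [pow_succ', mul_assoc, ← hzw]; ring⟩
  exact Set.infinite_of_injective_forall_mem
    ((mul_left_injective₀ (sub_ne_zero.2 hne)).comp hL) hdiff (hs.image2 _ hs)

theorem finite_setOf_eval_affine_eq_mul_eval {P : R[X]} (hP : {z | P.IsRoot z}.Nontrivial)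
    (hP0 : P ≠ 0) {L : R} (hL : Function.Injective fun n : ℕ => L ^ n) (e r : R) :
    {x | P.eval (L * x + e) = r * P.eval x}.Finite := by
  by_contra hinf
  have hcomp : P.comp (C L * X + C e) = C r * P :=
    eq_of_infinite_eval_eq _ _ (Set.Infinite.mono (fun x hx => by simpa using hx) hinf)
  have hmaps : Set.MapsTo (fun z => L * z + e) {z | P.IsRoot z} {z | P.IsRoot z} := by
    intro z hz
    have hz' : P.eval z = 0 := hz
    simpa [hz'] using congrArg (eval z) hcomp
  exact Set.not_subsingleton_iff.2 hP
    (subsingleton_of_mapsTo_affine (finite_setOfPred_isRoot hP0) hL hmaps)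

end AffineSelfSimilarity

theorem exists_intCast_eq_of_tendsto {ι : Type*} {l : Filter ι} [l.NeBot] {u : ι → ℤ} {c : ℝ}
    (hu : Tendsto (fun i => (u i : ℝ)) l (𝓝 c)) : ∃ k : ℤ, (k : ℝ) = c ∧ ∀ᶠ i in l, u i = k := by
  have hrange := Int.isClosedEmbedding_coe_real.isClosed_range
  obtain ⟨k, rfl⟩ := hrange.mem_of_tendsto hu (.of_forall fun i => Set.mem_range_self (u i))
  refine ⟨k, rfl, ?_⟩
  simpa using Int.isClosedEmbedding_coe_real.isInducing.tendsto_nhds_iff.2 hu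

theorem exists_ratCast_eq_and_eventually_eq_affine {l : Filter ℤ} [l.NeBot] {g : ℤ} (hg : g ≠ 0)
    {y : ℤ → ℤ} {ρ c : ℝ} (hy : Tendsto (fun x => (y x : ℝ) - ρ * x) l (𝓝 c))
    (hy_shift : Tendsto (fun x => (y (x + g) : ℝ) - ρ * (x + g : ℤ)) l (𝓝 c)) :
    ∃ L e : ℚ, (L : ℝ) = ρ ∧ ∀ᶠ x in l, (y x : ℚ) = L * x + e := by
  obtain ⟨k, hk, -⟩ : ∃ k : ℤ, (k : ℝ) = ρ * g ∧ ∀ᶠ x in l, y (x + g) - y x = k := by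
    refine exists_intCast_eq_of_tendsto ?_
    convert (hy_shift.sub hy).add_const (ρ * g) using 2
    · push_cast
      ring
    · ring
  obtain ⟨b, -, hb⟩ : ∃ b : ℤ, (b : ℝ) = g * c ∧ ∀ᶠ x in l, g * y x - k * x = b := by
    refine exists_intCast_eq_of_tendsto ((hy.const_mul (g : ℝ)).congr fun x => ?_)
    push_cast
    rw [hk]
    ring
  refine ⟨k / g, b / g, ?_, hb.mono fun x hx => ?_⟩
  · push_cast
    rw [hk, mul_div_cancel_right₀ _ (Int.cast_ne_zero.2 hg)]
  · have hg' : (g : ℚ) ≠ 0 := Int.cast_ne_zero.2 hg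
    field_simp
    rw [mul_comm]
    exact_mod_cast eq_add_of_sub_eq' hx

theorem intCast_eval (R : Type*) [Ring R] (f : ℤ[X]) (n : ℤ) :
    ((f.eval n : ℤ) : R) = (f.map (Int.castRingHom R)).eval (n : R) := by
  rw [eval_intCast_map, eq_intCast, Int.cast_id]

theorem natDegree_map_intCast (R : Type*) [Ring R] [CharZero R] (f : ℤ[X]) :
    (f.map (Int.castRingHom R)).natDegree = f.natDegree :=
  natDegree_map_eq_of_injective Int.cast_injective f

section ValueRatio

variable {f : ℤ[X]} {r : ℚ}

section Asymptotics

variable {ι : Type*} {l : Filter ι} {x y : ι → ℤ}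

theorem tendsto_atTop_of_intCast_eval_eq_mul_eval (hf : 0 < f.natDegree) (hr : r ≠ 0)
    (hx : Tendsto x l atTop) (hy : ∀ᶠ i in l, 0 < y i)
    (heval : ∀ᶠ i in l, ((f.eval (y i) : ℤ) : ℚ) = r * (f.eval (x i) : ℤ)) :
    Tendsto y l atTop := by
  have hfx : Tendsto (fun i => |((f.eval (x i) : ℤ) : ℚ)|) l atTop := by
    simp only [intCast_eval]
    refine (abs_tendsto_atTop _ ?_).comp (tendsto_intCast_atTop_atTop.comp hx)
    rwa [← natDegree_pos_iff_degree_pos, natDegree_map_intCast]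
  have hfy : Tendsto (fun i => |((f.eval (y i) : ℤ) : ℚ)|) l atTop := by
    refine (hfx.const_mul_atTop (abs_pos.2 hr)).congr' ?_
    filter_upwards [heval] with i hi
    rw [hi, abs_mul]
  have hcofinite : Tendsto y l cofinite :=
    (tendsto_comap_iff.2 (hfy.mono_right atTop_le_cofinite)).mono_right
      (comap_cofinite_le fun n : ℤ => |((f.eval n : ℤ) : ℚ)|)
  refine tendsto_atTop.2 fun b => ?_
  filter_upwards [hy, hcofinite.eventually (Set.finite_Ioo 0 b).eventually_cofinite_notMem]
    with i hpos hi
  exact not_lt.1 fun hlt => hi ⟨hpos, hlt⟩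

theorem pos_and_tendsto_sub_mul_of_intCast_eval_eq_mul_eval [l.NeBot] (hf : 0 < f.natDegree)
    (hr : r ≠ 0) (hx : Tendsto x l atTop) (hy : ∀ᶠ i in l, 0 < y i)
    (heval : ∀ᶠ i in l, ((f.eval (y i) : ℤ) : ℚ) = r * (f.eval (x i) : ℤ)) :
    0 < r ∧ Tendsto (fun i => (y i : ℝ) - (r : ℝ) ^ (f.natDegree : ℝ)⁻¹ * x i) l
      (𝓝 ((1 - (r : ℝ) ^ (f.natDegree : ℝ)⁻¹) * rootMean (f.map (Int.castRingHom ℝ)))) := by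
  have hdeg : 0 < (f.map (Int.castRingHom ℝ)).natDegree := by rwa [natDegree_map_intCast]
  have hx' := (tendsto_intCast_atTop_atTop (R := ℝ)).comp hx
  have hy' := (tendsto_intCast_atTop_atTop (R := ℝ)).comp
    (tendsto_atTop_of_intCast_eval_eq_mul_eval hf hr hx hy heval)
  have heval' : ∀ᶠ i in l, (f.map (Int.castRingHom ℝ)).eval (y i : ℝ) =
      (r : ℝ) * (f.map (Int.castRingHom ℝ)).eval (x i : ℝ) := by
    filter_upwards [heval] with i hi
    rw [← intCast_eval, ← intCast_eval]
    exact_mod_cast congrArg (Rat.cast : ℚ → ℝ) hi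
  have hpos : (0 : ℝ) < r := pos_of_eval_eq_mul_eval hdeg hx' hy' heval'
  refine ⟨mod_cast hpos, ?_⟩
  simpa only [natDegree_map_intCast, Function.comp_apply] using
    tendsto_sub_mul_of_eval_eq_mul_eval hdeg hpos.le hx' hy' heval'

end Asymptotics

/-- The integers `x` such that `r * f(x)` is the value of `f` at some positive integer. The
equation is posed in `ℚ`, so `r * f(x)` is not assumed to be an integer. -/
def valueRatioSet (f : ℤ[X]) (r : ℚ) : Set ℤ :=
  {x | ∃ y : ℤ, 0 < y ∧ ((f.eval y : ℤ) : ℚ) = r * (f.eval x : ℤ)}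

variable {K : Type*} [Field K] [CharZero K]

theorem natDegree_pos_of_nontrivial_rootSet (hroots : (f.rootSet K).Nontrivial) :
    0 < f.natDegree := by
  obtain ⟨α, hα⟩ := hroots.nonempty
  have hf : f ≠ 0 := by
    rintro rfl
    simp at hα
  exact natDegree_pos_of_aeval_root hf (aeval_eq_zero_of_mem_rootSet hα)
    fun n hn => by simpa using hn

theorem eventually_forall_eval_ne_of_eq_affine (hroots : (f.rootSet K).Nontrivial) {L : ℚ}
    (hL : Function.Injective fun n : ℕ => L ^ n) (e r : ℚ) :
    ∀ᶠ x : ℤ in atTop, ∀ y : ℤ, (y : ℚ) = L * x + e →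
      ((f.eval y : ℤ) : ℚ) ≠ r * (f.eval x : ℤ) := by
  have hf : f ≠ 0 := ne_zero_of_natDegree_gt (natDegree_pos_of_nontrivial_rootSet hroots)
  have hP : f.map (Int.castRingHom K) ≠ 0 := (Polynomial.map_ne_zero_iff Int.cast_injective).2 hf
  have hP_roots : {z | (f.map (Int.castRingHom K)).IsRoot z}.Nontrivial :=
    hroots.mono fun z hz => by
      rw [Set.mem_ofPred_eq, IsRoot, eval_map]
      exact aeval_eq_zero_of_mem_rootSet hz
  have hL' : Function.Injective fun n : ℕ => (L : K) ^ n := fun i j hij =>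
    hL (Rat.cast_injective (α := K) (by simpa using hij))
  have hfinite := (finite_setOf_eval_affine_eq_mul_eval hP_roots hP hL' e r).preimage
    (Int.cast_injective (α := K)).injOn
  filter_upwards [atTop_le_cofinite hfinite.eventually_cofinite_notMem] with x hx y hy heval
  have hyK : (L : K) * x + e = y := mod_cast congrArg (Rat.cast : ℚ → K) hy.symm
  refine hx ?_
  rw [Set.mem_preimage, Set.mem_ofPred_eq, hyK, ← intCast_eval, ← intCast_eval]
  exact_mod_cast congrArg (Rat.cast : ℚ → K) heval

theorem exists_affine_of_frequently_add_mem_valueRatioSet (hf : 0 < f.natDegree) (hr : r ≠ 0)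
    {g : ℤ} (hg : g ≠ 0)
    (hfreq : ∃ᶠ x in atTop, x ∈ valueRatioSet f r ∧ x + g ∈ valueRatioSet f r) :
    ∃ L e : ℚ, 0 ≤ L ∧ L ^ f.natDegree = r ∧
      ∃ᶠ x : ℤ in atTop, ∃ y : ℤ, (y : ℚ) = L * x + e ∧
        ((f.eval y : ℤ) : ℚ) = r * (f.eval x : ℤ) := by
  set T := {x | x ∈ valueRatioSet f r ∧ x + g ∈ valueRatioSet f r}
  set l := atTop ⊓ 𝓟 T
  have hl : l.NeBot := frequently_mem_iff_neBot.1 hfreq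
  have hT : ∀ᶠ x in l, x ∈ T := mem_inf_of_right (mem_principal_self T)
  have hid : Tendsto id l atTop := tendsto_inf_left tendsto_id
  choose! y hy_pos hy_eval using fun x (hx : x ∈ valueRatioSet f r) => hx
  obtain ⟨hr_pos, hlim⟩ := pos_and_tendsto_sub_mul_of_intCast_eval_eq_mul_eval hf hr hid
    (hT.mono fun x hx => hy_pos x hx.1) (hT.mono fun x hx => hy_eval x hx.1)
  obtain ⟨-, hlim_shift⟩ := pos_and_tendsto_sub_mul_of_intCast_eval_eq_mul_eval hf hr
    (tendsto_atTop_add_const_right l g hid)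
    (hT.mono fun x hx => hy_pos (x + g) hx.2) (hT.mono fun x hx => hy_eval (x + g) hx.2)
  obtain ⟨L, e, hL, haffine⟩ :=
    exists_ratCast_eq_and_eventually_eq_affine hg hlim hlim_shift
  have hr_nonneg : (0 : ℝ) ≤ r := mod_cast hr_pos.le
  have hL_nonneg : (0 : ℝ) ≤ L := hL ▸ Real.rpow_nonneg hr_nonneg _
  have hL_pow : (L : ℝ) ^ f.natDegree = r := by
    rw [hL, Real.rpow_inv_natCast_pow hr_nonneg hf.ne']
  refine ⟨L, e, mod_cast hL_nonneg, mod_cast hL_pow, ?_⟩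
  exact ((haffine.and hT).mono fun x hx => ⟨y x, hx.1, hy_eval x hx.2.1⟩).frequently.filter_mono
    inf_le_left

theorem eventually_add_notMem_valueRatioSet (hroots : (f.rootSet K).Nontrivial)
    (hr0 : r ≠ 0) (hr1 : r ≠ 1) {g : ℤ} (hg : 0 < g) :
    ∀ᶠ x in atTop, x ∈ valueRatioSet f r → x + g ∉ valueRatioSet f r := by
  have hf : 0 < f.natDegree := natDegree_pos_of_nontrivial_rootSet hroots
  by_contra hcon
  obtain ⟨L, e, hL_nonneg, rfl, hfreq⟩ :=
    exists_affine_of_frequently_add_mem_valueRatioSet hf hr0 hg.ne'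
      (by simpa only [not_eventually, Classical.not_imp, not_not] using hcon)
  have hL_pos : 0 < L := hL_nonneg.lt_of_ne' fun h => hr0 (by rw [h, zero_pow hf.ne'])
  have hL_one : L ≠ 1 := fun h => hr1 (by rw [h, one_pow])
  obtain ⟨x, ⟨y, hy, heval⟩, hx⟩ := (hfreq.and_eventually
    (eventually_forall_eval_ne_of_eq_affine hroots
      (pow_right_injective₀ hL_pos hL_one) e (L ^ f.natDegree))).exists
  exact hx y hy heval

theorem densityZero_valueRatioSet (hroots : (f.rootSet K).Nontrivial) (hr0 : r ≠ 0)
    (hr1 : r ≠ 1) : DensityZero (valueRatioSet f r) :=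
  densityZero_of_eventually_add_notMem fun _ hg =>
    eventually_add_notMem_valueRatioSet hroots hr0 hr1 hg

end ValueRatio

section LatticeSquare

/-- The lattice points of `[1, N]²`, against which densities of sets of points are measured. -/
def latticeSquare (N : ℕ) : Set (ℤ × ℤ) := Set.Icc 1 (N : ℤ) ×ˢ Set.Icc 1 (N : ℤ)

theorem finite_latticeSquare (N : ℕ) : (latticeSquare N).Finite :=
  (Set.finite_Icc _ _).prod (Set.finite_Icc _ _)

theorem ncard_Icc_one_natCast (N : ℕ) : (Set.Icc 1 (N : ℤ)).ncard = N := by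
  rw [← Finset.coe_Icc, Set.ncard_coe_finset, Int.card_Icc, add_sub_cancel_right,
    Int.toNat_natCast]

theorem ncard_latticeSquare (N : ℕ) : (latticeSquare N).ncard = N ^ 2 := by
  rw [latticeSquare, Set.ncard_prod, ncard_Icc_one_natCast, sq]

theorem ncard_inter_latticeSquare_le {B : Set (ℤ × ℤ)} {E Q : Set ℤ}
    (hB : ∀ p ∈ B, p.1 ∈ E ∨ p.2 ∈ Q) (N : ℕ) :
    (B ∩ latticeSquare N).ncard ≤ countUpTo E N * N + N * countUpTo Q N := by
  have hcover : B ∩ latticeSquare N ⊆ (E ∩ Set.Icc 1 (N : ℤ)) ×ˢ Set.Icc 1 (N : ℤ) ∪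
      Set.Icc 1 (N : ℤ) ×ˢ (Q ∩ Set.Icc 1 (N : ℤ)) := fun p ⟨hpB, hp⟩ =>
    (hB p hpB).imp (fun hE => ⟨⟨hE, hp.1⟩, hp.2⟩) fun hQ => ⟨hp.1, hQ, hp.2⟩
  calc (B ∩ latticeSquare N).ncard
      ≤ _ := Set.ncard_le_ncard hcover (Set.toFinite _)
    _ ≤ _ := Set.ncard_union_le _ _
    _ = countUpTo E N * N + N * countUpTo Q N := by
      simp only [Set.ncard_prod, ncard_Icc_one_natCast, countUpTo]

theorem isLittleO_ncard_inter_latticeSquare {B : Set (ℤ × ℤ)}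
    (hB : ∀ ε : ℝ, 0 < ε → ∃ E Q : Set ℤ, DensityZero E ∧
      (∀ᶠ N : ℕ in atTop, (countUpTo Q N : ℝ) ≤ ε * N) ∧ ∀ p ∈ B, p.1 ∈ E ∨ p.2 ∈ Q) :
    (fun N => ((B ∩ latticeSquare N).ncard : ℝ)) =o[atTop] fun N : ℕ => (N : ℝ) ^ 2 := by
  refine isLittleO_iff.2 fun ε hε => ?_
  obtain ⟨E, Q, hE, hQ, hcover⟩ := hB (ε / 2) (half_pos hε)
  filter_upwards [densityZero_iff.1 hE (ε / 2) (half_pos hε), hQ] with N hEN hQN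
  rw [Real.norm_natCast, norm_pow, Real.norm_natCast]
  calc ((B ∩ latticeSquare N).ncard : ℝ)
      ≤ countUpTo E N * N + N * countUpTo Q N := mod_cast ncard_inter_latticeSquare_le hcover N
    _ ≤ ε / 2 * N * N + N * (ε / 2 * N) := by gcongr
    _ = ε * N ^ 2 := by ring

theorem tendsto_ncard_latticeSquare_diff_div_sq {B : Set (ℤ × ℤ)}
    (hB : (fun N => ((B ∩ latticeSquare N).ncard : ℝ)) =o[atTop] fun N : ℕ => (N : ℝ) ^ 2) :
    Tendsto (fun N => ((latticeSquare N \ B).ncard : ℝ) / (N : ℝ) ^ 2) atTop (𝓝 1) := by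
  have hlim := hB.tendsto_div_nhds_zero.const_sub 1
  rw [sub_zero] at hlim
  refine hlim.congr' ?_
  filter_upwards [eventually_ne_atTop 0] with N hN
  have hcard : ((latticeSquare N \ B).ncard : ℝ) = N ^ 2 - (B ∩ latticeSquare N).ncard := by
    rw [← Set.sdiff_inter_self_eq_sdiff, Set.cast_ncard_sdiff Set.inter_subset_right
      (finite_latticeSquare N), ncard_latticeSquare, Nat.cast_pow]
  rw [hcard, sub_div, div_self (by positivity)]

end LatticeSquare

section RationalDenominators

theorem intCast_den_dvd_of_intCast_eq_mul {q : ℚ} {h k : ℤ} (hk : (k : ℚ) = h * q) :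
    (q.den : ℤ) ∣ h := by
  have hclear : k * q.den = h * q.num := by
    have := congrArg (· * (q.den : ℚ)) hk
    simp only [mul_assoc, Rat.mul_den_eq_num] at this
    exact_mod_cast this
  exact (Rat.isCoprime_num_den q).symm.dvd_of_dvd_mul_right (Dvd.intro_left k hclear)

theorem finite_setOf_abs_le_and_den_le (B : ℚ) (K : ℕ) : {r : ℚ | |r| ≤ B ∧ r.den ≤ K}.Finite := by
  refine ((Set.finite_Icc (-⌊B * K⌋) ⌊B * K⌋).image2 (fun (n : ℤ) (q : ℕ) => (n / q : ℚ))
    (Set.finite_Iic K)).subset fun r ⟨habs, hden⟩ => ⟨r.num, ?_, r.den, hden, r.num_div_den⟩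
  have hnum : |(r.num : ℚ)| ≤ B * K := by
    rw [← Rat.mul_den_eq_num, abs_mul, Nat.abs_cast]
    gcongr
    exact (abs_nonneg r).trans habs
  exact abs_le.1 (Int.le_floor.2 (by exact_mod_cast hnum))

end RationalDenominators

section Invisible

variable {f : ℤ[X]}

/-- `|f|` has a nonzero strict record at `a`: `|f(a)|` exceeds `|f(u)|` for every positive integer
`u < a`, so that all ratios `f(u) / f(a)` lie in `(-1, 1)`. -/
def IsAbsRecord (f : ℤ[X]) (a : ℤ) : Prop :=
  f.eval a ≠ 0 ∧ ∀ u : ℤ, 0 < u → u < a → |f.eval u| < |f.eval a|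

theorem eventually_isAbsRecord (hf : 0 < f.natDegree) : ∀ᶠ a in atTop, IsAbsRecord f a := by
  have hlt := eventually_forall_abs_eval_intCast_lt (f := f.map (Int.castRingHom ℝ))
    (by rwa [natDegree_map_intCast])
  filter_upwards [hlt, eventually_gt_atTop 1] with a ha hone
  have hrecord : ∀ u : ℤ, 0 < u → u < a → |f.eval u| < |f.eval a| := fun u hu hua => by
    have := ha u hu hua
    rw [← intCast_eval, ← intCast_eval] at this
    exact_mod_cast this
  exact ⟨abs_pos.1 ((abs_nonneg _).trans_lt (hrecord 1 one_pos hone)), hrecord⟩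

theorem exists_ratio_of_not_visibleAlong {a h : ℤ} {m : ℕ} (hm : m ≠ 0) (ha : f.eval a ≠ 0)
    (hinvisible : ¬ VisibleAlong (f ^ m) a h) :
    ∃ (u : ℤ) (r : ℚ), 0 < u ∧ u < a ∧ ((f.eval u : ℤ) : ℚ) = r * (f.eval a : ℤ) ∧ r ≠ 0 ∧
      (r.den : ℤ) ^ m ∣ h := by
  have ha' : ((f.eval a : ℤ) : ℚ) ≠ 0 := Int.cast_ne_zero.2 ha
  simp only [VisibleAlong, eval_pow, Int.cast_pow, not_exists, not_and, not_forall,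
    not_le] at hinvisible
  obtain ⟨u, hu, ⟨k, hk_pos, hk⟩, hua⟩ := hinvisible (h / (f.eval a : ℤ) ^ m) (by field_simp)
  set r : ℚ := (f.eval u : ℤ) / (f.eval a : ℤ) with hr
  have hk_ratio : (k : ℚ) = h * r ^ m := by rw [hk, hr]; ring
  refine ⟨u, r, hu, hua, (div_mul_cancel₀ _ ha').symm, fun hr0 => ?_, ?_⟩
  · rw [hr0, zero_pow hm, mul_zero, Int.cast_eq_zero] at hk_ratio
    exact hk_pos.ne' hk_ratio
  · simpa using intCast_den_dvd_of_intCast_eq_mul hk_ratio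

/-- The abscissae discarded at denominator cutoff `K`: those where `|f|` has no record, and those
where some `r * f(a)` with `0 < |r| < 1` of denominator at most `K` is again a value of `f`. -/
def exceptionalAbscissae (f : ℤ[X]) (K : ℕ) : Set ℤ :=
  {a | ¬ IsAbsRecord f a} ∪ ⋃ r ∈ {r : ℚ | r ≠ 0 ∧ |r| < 1 ∧ r.den ≤ K}, valueRatioSet f r

theorem densityZero_exceptionalAbscissae {F : Type*} [Field F] [CharZero F]
    (hroots : (f.rootSet F).Nontrivial) (K : ℕ) : DensityZero (exceptionalAbscissae f K) := by
  refine (densityZero_setOf_not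
    (eventually_isAbsRecord (natDegree_pos_of_nontrivial_rootSet hroots))).union
    (densityZero_biUnion ?_ fun r ⟨hr0, hr1, _⟩ => densityZero_valueRatioSet hroots hr0 ?_)
  · exact (finite_setOf_abs_le_and_den_le 1 K).subset fun r hr => ⟨hr.2.1.le, hr.2.2⟩
  · rintro rfl
    simp at hr1

theorem mem_exceptionalAbscissae_or_mem_largeSquareMultiples {m : ℕ} (hm : 2 ≤ m) {a h : ℤ}
    (hinvisible : ¬ VisibleAlong (f ^ m) a h) (K : ℕ) :
    a ∈ exceptionalAbscissae f K ∨ h ∈ largeSquareMultiples K := by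
  by_cases hrecord : IsAbsRecord f a
  · obtain ⟨u, r, hu, hua, heval, hr0, hdvd⟩ :=
      exists_ratio_of_not_visibleAlong (by omega) hrecord.1 hinvisible
    rcases le_or_gt r.den K with hden | hden
    · have hr1 : |r| < 1 := by
        have hlt : |((f.eval u : ℤ) : ℚ)| < |((f.eval a : ℤ) : ℚ)| :=
          mod_cast hrecord.2 u hu hua
        rw [heval, abs_mul] at hlt
        exact (mul_lt_iff_lt_one_left (abs_pos.2 (Int.cast_ne_zero.2 hrecord.1))).1 hlt
      exact Or.inl (Or.inr (Set.mem_biUnion ⟨hr0, hr1, hden⟩ ⟨u, hu, heval⟩))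
    · exact Or.inr ⟨r.den, hden, (pow_dvd_pow _ hm).trans hdvd⟩
  · exact Or.inl (Or.inl hrecord)

theorem visibleSet_eq_latticeSquare_diff (F : ℤ[X]) (N : ℕ) :
    visibleSet F N = latticeSquare N \ {p | ¬ VisibleAlong F p.1 p.2} := by
  ext p
  simp only [visibleSet, latticeSquare, Set.mem_sdiff, Set.mem_prod, Set.mem_Icc,
    Set.mem_ofPred_eq, not_not, and_assoc]

end Invisible

theorem visibility_density_one_general {F : Type*} [Field F] [CharZero F] (f : ℤ[X])
    (hroots : (f.rootSet F).Nontrivial) (m : ℕ) (hm : 2 ≤ m) :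
    Tendsto (fun N : ℕ => ((visibleSet (f ^ m) N).ncard : ℝ) / (N : ℝ) ^ 2) atTop (𝓝 1) := by
  simp only [visibleSet_eq_latticeSquare_diff]
  refine tendsto_ncard_latticeSquare_diff_div_sq
    (isLittleO_ncard_inter_latticeSquare fun ε hε => ?_)
  obtain ⟨K, hK⟩ := exists_nat_gt ε⁻¹
  have hK_pos : (0 : ℝ) < K := (inv_pos.2 hε).trans hK
  refine ⟨exceptionalAbscissae f K, largeSquareMultiples K,
    densityZero_exceptionalAbscissae hroots K, .of_forall fun N => ?_,
    fun p hp => mem_exceptionalAbscissae_or_mem_largeSquareMultiples hm hp K⟩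
  calc (countUpTo (largeSquareMultiples K) N : ℝ)
      ≤ N / K := countUpTo_largeSquareMultiples_le (mod_cast hK_pos.ne') N
    _ = (K : ℝ)⁻¹ * N := by rw [div_eq_inv_mul]
    _ ≤ ε * N := by gcongr; exact inv_le_of_inv_le₀ hε hK.le

theorem visibility_density_one
    (f : Polynomial ℤ) (hd : 2 ≤ f.natDegree) (hlead : 0 < f.leadingCoeff)
    (hroots : ∃ α β : AlgebraicClosure ℚ, α ≠ β ∧
      Polynomial.aeval α f = 0 ∧ Polynomial.aeval β f = 0)
    (m : ℕ) (hm : 2 ≤ m) :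
    Tendsto (fun N : ℕ => ((visibleSet (f ^ m) N).ncard : ℝ) / (N : ℝ) ^ 2)
      atTop (nhds 1) := by
  obtain ⟨α, β, hne, hα, hβ⟩ := hroots
  have hf : f ≠ 0 := leadingCoeff_ne_zero.1 hlead.ne'
  exact visibility_density_one_general f
    ⟨α, mem_rootSet.2 ⟨hf, hα⟩, β, mem_rootSet.2 ⟨hf, hβ⟩, hne⟩ m hm
end

section
/- Let F ∈ ℤ[x] be a nonconstant polynomial with positive leading coefficient and let n_F be as in the context. Then there is a constant C depending only on F such that #E_F(N) ≤ C·N for all positive integers N, where E_F(N) is the set of invisible lattice points (a,h) with 1 ≤ a ≤ N and 1 ≤ h ≤ N such that every lattice point (b,k) blocking (a,h) from being visible along F satisfies b ≤ n_F. -/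
open Polynomial Filter

/-- The lattice point `(b, k)` *blocks* `(a, h)` from being visible along `F`. -/
def BlocksAlong (F : Polynomial ℤ) (b k a h : ℤ) : Prop :=
  0 < b ∧ 0 < k ∧ b < a ∧
    ∃ t : ℚ, (h : ℚ) = t * ((F.eval a : ℤ) : ℚ) ∧ (k : ℚ) = t * ((F.eval b : ℤ) : ℚ)

/-- `E_F(N)`: the set of invisible lattice points in `[1,N]²` all of whose blockers
have first coordinate at most `nF`. -/
def EFset (F : Polynomial ℤ) (nF : ℤ) (N : ℕ) : Set (ℤ × ℤ) :=
  {p | 1 ≤ p.1 ∧ p.1 ≤ (N : ℤ) ∧ 1 ≤ p.2 ∧ p.2 ≤ (N : ℤ) ∧ ¬ VisibleAlong F p.1 p.2 ∧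
    ∀ b k : ℤ, BlocksAlong F b k p.1 p.2 → b ≤ nF}

/-!
A point `(a, h)` of `E_F(N)` with `a > nF` has a blocker `(b, k)` with `b ≤ nF`, so `F(b)` is
bounded by a constant `M` independent of `a`. Moving from `a` to `c = a - F(b)` preserves `F`
modulo `F(b)`, so some `(c, l)` blocks `(a, h)` too; if `a > nF + M`, then `c > nF`, a
contradiction. Hence `E_F(N)` lies in the columns `a ≤ nF + M`, each of which contributes at
most `N` points.
-/

section Blocking

variable {F : Polynomial ℤ} {a b c h k : ℤ}

theorem blocksAlong_iff_mul_eval_eq (hFa : F.eval a ≠ 0) :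
    BlocksAlong F b k a h ↔ 0 < b ∧ 0 < k ∧ b < a ∧ k * F.eval a = h * F.eval b := by
  have hFaQ : ((F.eval a : ℤ) : ℚ) ≠ 0 := mod_cast hFa
  refine and_congr_right' (and_congr_right' (and_congr_right' ⟨?_, fun hcross => ?_⟩))
  · rintro ⟨t, hh, hk⟩
    have hcross : (k : ℚ) * (F.eval a : ℤ) = h * (F.eval b : ℤ) := by
      rw [hh, hk]
      ring
    exact_mod_cast hcross
  · have hcrossQ : (k : ℚ) * (F.eval a : ℤ) = h * (F.eval b : ℤ) := mod_cast hcross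
    refine ⟨h / (F.eval a : ℤ), (div_mul_cancel₀ _ hFaQ).symm, ?_⟩
    rw [div_mul_eq_mul_div, ← hcrossQ, mul_div_cancel_right₀ _ hFaQ]

theorem exists_blocksAlong_of_not_visibleAlong (hFa : F.eval a ≠ 0)
    (hinvisible : ¬ VisibleAlong F a h) : ∃ b k, BlocksAlong F b k a h := by
  have hFaQ : ((F.eval a : ℤ) : ℚ) ≠ 0 := mod_cast hFa
  have hh : (h : ℚ) = h / (F.eval a : ℤ) * (F.eval a : ℤ) := (div_mul_cancel₀ _ hFaQ).symm
  by_contra! hnone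
  refine hinvisible ⟨h / (F.eval a : ℤ), hh, fun u hu ⟨k, hk, hku⟩ => ?_⟩
  by_contra! hua
  exact hnone u k ⟨hu, hk, hua, _, hh, hku⟩

namespace BlocksAlong

theorem eval_pos (hblocks : BlocksAlong F b k a h) (hFa : 0 < F.eval a) (hh : 0 < h) :
    0 < F.eval b := by
  obtain ⟨-, hk, -, hcross⟩ := (blocksAlong_iff_mul_eval_eq hFa.ne').1 hblocks
  exact pos_of_mul_pos_right (hcross ▸ mul_pos hk hFa) hh.le

theorem exists_of_eval_dvd_sub (hblocks : BlocksAlong F b k a h) (hFa : 0 < F.eval a)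
    (hh : 0 < h) (hc : 0 < c) (hca : c < a) (hFc : 0 < F.eval c) (hdvd : F.eval b ∣ c - a) :
    ∃ l, BlocksAlong F c l a h := by
  obtain ⟨-, -, -, hcross⟩ := (blocksAlong_iff_mul_eval_eq hFa.ne').1 hblocks
  obtain ⟨m, hm⟩ : F.eval b ∣ F.eval c - F.eval a := hdvd.trans (F.sub_dvd_eval_sub c a)
  have hcross' : (h + k * m) * F.eval a = h * F.eval c := by
    linear_combination m * hcross - h * hm
  have hl : 0 < h + k * m := pos_of_mul_pos_left (hcross' ▸ mul_pos hh hFc) hFa.le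
  exact ⟨h + k * m, (blocksAlong_iff_mul_eval_eq hFa.ne').2 ⟨hc, hl, hca, hcross'⟩⟩

end BlocksAlong

end Blocking

theorem fst_le_of_mem_EFset {F : Polynomial ℤ} {n M : ℤ} {N : ℕ} {p : ℤ × ℤ} (hn : 0 ≤ n)
    (hM : 0 ≤ M) (hpos : ∀ a, n < a → 0 < F.eval a) (hbound : ∀ b, 1 ≤ b → b ≤ n → F.eval b ≤ M)
    (hp : p ∈ EFset F n N) : p.1 ≤ n + M := by
  obtain ⟨a, h⟩ := p
  obtain ⟨-, -, hh, -, hinvisible, hblockers⟩ := hp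
  dsimp only at hh hinvisible hblockers ⊢
  by_contra! ha
  have hFa : 0 < F.eval a := hpos a (by lia)
  obtain ⟨b, k, hblocks⟩ := exists_blocksAlong_of_not_visibleAlong hFa.ne' hinvisible
  have hFb : 0 < F.eval b := hblocks.eval_pos hFa hh
  have hFbM : F.eval b ≤ M := hbound b hblocks.1 (hblockers b k hblocks)
  have hshift : n < a - F.eval b := by lia
  obtain ⟨l, hblocks'⟩ : ∃ l, BlocksAlong F (a - F.eval b) l a h :=
    hblocks.exists_of_eval_dvd_sub hFa hh (by lia) (by lia) (hpos _ hshift) ⟨-1, by ring⟩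
  exact hshift.not_ge (hblockers _ l hblocks')

theorem ncard_le_mul_of_subset_Icc_prod_Icc {S : Set (ℤ × ℤ)} {M N : ℕ}
    (hS : S ⊆ Set.Icc 1 (M : ℤ) ×ˢ Set.Icc 1 (N : ℤ)) : S.ncard ≤ M * N := by
  calc S.ncard ≤ (Set.Icc 1 (M : ℤ) ×ˢ Set.Icc 1 (N : ℤ)).ncard :=
        Set.ncard_le_ncard hS ((Set.finite_Icc _ _).prod (Set.finite_Icc _ _))
    _ = M * N := by
        simp [Set.ncard_prod, ← Finset.coe_Icc, Set.ncard_coe_finset]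

theorem EF_linear_bound
    (F : Polynomial ℤ) (hdeg : 1 ≤ F.natDegree) (hlead : 0 < F.leadingCoeff)
    (nF : ℤ) (hnF : 0 < nF)
    (hnFprop : ∀ a b : ℤ, nF < a → 1 ≤ b → b < a →
      F.eval b < F.eval a ∧ 0 < F.eval a) :
    ∃ C : ℝ, ∀ N : ℕ, 0 < N → ((EFset F nF N).ncard : ℝ) ≤ C * (N : ℝ) := by
  have hpos : ∀ a, nF < a → 0 < F.eval a := fun a ha =>
    (hnFprop a 1 ha le_rfl (by lia)).2
  have hbound : ∀ b, 1 ≤ b → b ≤ nF → F.eval b ≤ F.eval (nF + 1) := fun b hb hbn =>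
    (hnFprop (nF + 1) b (by lia) hb (by lia)).1.le
  have hM : 0 < F.eval (nF + 1) := hpos _ (by lia)
  refine ⟨((nF + F.eval (nF + 1)).toNat : ℝ), fun N _ => ?_⟩
  have hsubset : EFset F nF N ⊆
      Set.Icc 1 ((nF + F.eval (nF + 1)).toNat : ℤ) ×ˢ Set.Icc 1 (N : ℤ) := fun p hp =>
    ⟨⟨hp.1, (fst_le_of_mem_EFset hnF.le hM.le hpos hbound hp).trans (Int.self_le_toNat _)⟩,
      hp.2.2.1, hp.2.2.2.1⟩
  exact_mod_cast ncard_le_mul_of_subset_Icc_prod_Icc hsubset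
end

section
/- Let F ∈ ℤ[x] be a nonconstant polynomial with positive leading coefficient and let n_F be as in the context. If a, b, N are positive integers with n_F < b < a ≤ N, then #Block_F(a,b;N) ≤ N·gcd(F(a),F(b))/F(a). -/
open Polynomial Filter

/-- `Block_F(a,b;N)`: the set of lattice points `(a,h) ∈ [1,N]²` (with first
coordinate equal to `a`) blocked by `(b,k)` for some integer `k`. -/
def blockSet (F : Polynomial ℤ) (a b : ℤ) (N : ℕ) : Set (ℤ × ℤ) :=
  {p | p.1 = a ∧ 1 ≤ p.1 ∧ p.1 ≤ (N : ℤ) ∧ 1 ≤ p.2 ∧ p.2 ≤ (N : ℤ) ∧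
    ∃ k : ℤ, BlocksAlong F b k p.1 p.2}

/-!
If `(b, k)` blocks `(a, h)`, eliminating `t` gives `h * F(b) = k * F(a)`, so `F(a)` divides
`h * F(b)` and hence `F(a) / gcd(F(a), F(b))` divides `h`. The number of multiples of this
quotient in `[1, N]` is at most `N * gcd(F(a), F(b)) / F(a)`.
-/

lemma natAbs_div_gcd_dvd_of_dvd_mul {m n h : ℤ} (hm : m ≠ 0) (hdvd : m ∣ h * n) :
    m.natAbs / Int.gcd m n ∣ h.natAbs := by
  have hgcd_pos : 0 < Int.gcd m n := Int.gcd_pos_of_ne_zero_left n hm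
  have hdvd_natAbs : m.natAbs ∣ n.natAbs * h.natAbs := by
    rwa [mul_comm, ← Int.natAbs_mul, Int.natAbs_dvd_natAbs]
  exact (Nat.div_dvd_iff_dvd_mul (Nat.gcd_dvd_left _ _) hgcd_pos).mpr
    (dvd_gcd_mul_iff_dvd_mul.mpr hdvd_natAbs)

section

variable {F : ℤ[X]} {a b : ℤ} {N : ℕ}

lemma BlocksAlong.eval_dvd_mul_eval {k h : ℤ} (hblock : BlocksAlong F b k a h) :
    F.eval a ∣ h * F.eval b := by
  obtain ⟨-, -, -, t, hh, hk⟩ := hblock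
  have hcross : (h : ℚ) * F.eval b = F.eval a * k := by
    rw [hh, hk]
    ring
  exact ⟨k, mod_cast hcross⟩

lemma natAbs_eval_div_gcd_dvd_of_mem_blockSet (ha : F.eval a ≠ 0) {p : ℤ × ℤ}
    (hp : p ∈ blockSet F a b N) :
    (F.eval a).natAbs / Int.gcd (F.eval a) (F.eval b) ∣ p.2.natAbs := by
  obtain ⟨rfl, -, -, -, -, k, hblock⟩ := hp
  exact natAbs_div_gcd_dvd_of_dvd_mul ha hblock.eval_dvd_mul_eval

lemma injOn_natAbs_snd_blockSet : Set.InjOn (fun p : ℤ × ℤ ↦ p.2.natAbs) (blockSet F a b N) := by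
  rintro p ⟨hp, -, -, hp_pos, -⟩ q ⟨hq, -, -, hq_pos, -⟩ heq
  have hsnd : p.2 = q.2 := (Int.natAbs_inj_of_nonneg_of_nonneg (by omega) (by omega)).mp heq
  exact Prod.ext (hp.trans hq.symm) hsnd

lemma ncard_blockSet_le_div (ha : F.eval a ≠ 0) :
    (blockSet F a b N).ncard ≤ N / ((F.eval a).natAbs / Int.gcd (F.eval a) (F.eval b)) := by
  rw [← Nat.Ioc_filter_dvd_card_eq_div, ← Set.ncard_coe_finset]
  refine Set.ncard_le_ncard_of_injOn _ (fun p hp ↦ ?_) injOn_natAbs_snd_blockSet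
  have hdvd := natAbs_eval_div_gcd_dvd_of_mem_blockSet ha hp
  obtain ⟨-, -, -, hpos, hle, -⟩ := hp
  rw [Finset.mem_coe, Finset.mem_filter, Finset.mem_Ioc]
  exact ⟨by omega, hdvd⟩

end

theorem block_count_upper_bound_general (F : ℤ[X]) (a b : ℤ) (N : ℕ) (ha : F.eval a ≠ 0) :
    ((blockSet F a b N).ncard : ℝ) ≤
      (N : ℝ) * (Int.gcd (F.eval a) (F.eval b) : ℝ) / |((F.eval a : ℤ) : ℝ)| := by
  have hgcd_ne : (Int.gcd (F.eval a) (F.eval b) : ℝ) ≠ 0 :=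
    mod_cast (Int.gcd_pos_of_ne_zero_left _ ha).ne'
  have hgcd_dvd : Int.gcd (F.eval a) (F.eval b) ∣ (F.eval a).natAbs := Nat.gcd_dvd_left _ _
  calc ((blockSet F a b N).ncard : ℝ)
      ≤ ((N / ((F.eval a).natAbs / Int.gcd (F.eval a) (F.eval b)) : ℕ) : ℝ) :=
        mod_cast ncard_blockSet_le_div ha
    _ ≤ N / (((F.eval a).natAbs / Int.gcd (F.eval a) (F.eval b) : ℕ) : ℝ) := Nat.cast_div_le
    _ = N * Int.gcd (F.eval a) (F.eval b) / |((F.eval a : ℤ) : ℝ)| := by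
        rw [Nat.cast_div hgcd_dvd hgcd_ne, div_div_eq_mul_div, Nat.cast_natAbs, Int.cast_abs]

theorem block_count_upper_bound
    (F : Polynomial ℤ) (hdeg : 1 ≤ F.natDegree) (hlead : 0 < F.leadingCoeff)
    (nF : ℤ) (hnF : 0 < nF)
    (hnFprop : ∀ a b : ℤ, nF < a → 1 ≤ b → b < a →
      F.eval b < F.eval a ∧ 0 < F.eval a)
    (a b : ℤ) (N : ℕ) (hN : 0 < N) (hb : nF < b) (hba : b < a) (haN : a ≤ (N : ℤ)) :
    ((blockSet F a b N).ncard : ℝ) ≤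
      (N : ℝ) * (Int.gcd (F.eval a) (F.eval b) : ℝ) / ((F.eval a : ℤ) : ℝ) := by
  have hpos : 0 < F.eval a := (hnFprop a b (hb.trans hba) (hnF.trans hb) hba).2
  simpa only [abs_of_pos (Int.cast_pos.mpr hpos)] using
    block_count_upper_bound_general F a b N hpos.ne'
end

section
/- Let F ∈ ℤ[x] be a nonconstant polynomial with positive leading coefficient and let n_F be as in the context. Then there is a constant C depending only on F such that for all positive integers N, #Invisible_F(N) ≤ N·S_F(N) + C·N. -/
open Polynomial Filter

/-- The set of lattice points in `[1,N]²` that are invisible along `F`. -/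
def invisibleSet (F : Polynomial ℤ) (N : ℕ) : Set (ℤ × ℤ) :=
  {p | 1 ≤ p.1 ∧ p.1 ≤ (N : ℤ) ∧ 1 ≤ p.2 ∧ p.2 ≤ (N : ℤ) ∧ ¬ VisibleAlong F p.1 p.2}

/-- The gcd sum `S_F(N) = Σ_{a ≤ N} Σ_{n_F < b < a} gcd(F(a),F(b))/F(a)`. -/
noncomputable def SF (F : Polynomial ℤ) (nF : ℤ) (N : ℕ) : ℝ :=
  ∑ a ∈ Finset.Icc (1 : ℤ) (N : ℤ), ∑ b ∈ Finset.Ioo nF a,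
    (Int.gcd (F.eval a) (F.eval b) : ℝ) / ((F.eval a : ℤ) : ℝ)

/-!
Let `n` be the lower cutoff for `b` in `S_F(N)`. If `F(a) > 0`, a point `(a, h)` with `h > 0` is
invisible exactly when `F(a) ∣ h · F(u)` for some `0 < u < a` with `F(u) > 0`. There are at most
`N · gcd(F(a), F(b)) / F(a)` positive `h ≤ N` with `F(a) ∣ h · F(b)`, so a union bound over `b`
would give `N · S_F(N)` if only the `u > n` had to be considered. A `u ≤ n` can be traded for some
`b > n` with `b ≡ u` modulo `F(u)`, because then `F(u) ∣ F(b)`. The finitely many `0 < u ≤ n` need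
only finitely many such `b`, all of which are smaller than `a` once `a` is large; the finitely many
remaining columns contribute `O(N)`.
-/

open scoped Finset

theorem eval_dvd_eval_of_eval_dvd_sub {R : Type*} [CommRing R] (F : R[X]) {u b : R}
    (h : F.eval u ∣ b - u) : F.eval u ∣ F.eval b :=
  dvd_sub_self_right.1 (h.trans (F.sub_dvd_eval_sub b u))

theorem exists_gt_eval_dvd_eval (F : ℤ[X]) (n : ℤ) {u : ℤ} (hu : F.eval u ≠ 0) :
    ∃ b, n < b ∧ F.eval u ∣ F.eval b := by
  refine ⟨u + |F.eval u| * (|n - u| + 1), ?_, eval_dvd_eval_of_eval_dvd_sub F ?_⟩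
  · have h_one_le : 1 ≤ |F.eval u| := Int.one_le_abs hu
    nlinarith [le_abs_self (n - u), abs_nonneg (n - u)]
  · rw [add_sub_cancel_left]
    exact (self_dvd_abs _).mul_right _

theorem eventually_exists_mem_Ioo_eval_dvd_eval (F : ℤ[X]) (m n : ℤ) :
    ∀ᶠ a in atTop, ∀ u ∈ Finset.Ioo m a, F.eval u ≠ 0 →
      ∃ b ∈ Finset.Ioo n a, F.eval u ∣ F.eval b := by
  have h_small : ∀ᶠ a in atTop, ∀ u ∈ Finset.Ioc m n, F.eval u ≠ 0 →
      ∃ b ∈ Finset.Ioo n a, F.eval u ∣ F.eval b := by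
    refine (Finset.eventually_all _).2 fun u _ => ?_
    by_cases hu : F.eval u = 0
    · exact .of_forall fun a h => absurd hu h
    · obtain ⟨b, hnb, hdvd⟩ := exists_gt_eval_dvd_eval F n hu
      filter_upwards [eventually_gt_atTop b] with a hba _
      exact ⟨b, Finset.mem_Ioo.2 ⟨hnb, hba⟩, hdvd⟩
  filter_upwards [h_small] with a ha u hu hFu
  obtain ⟨hmu, hua⟩ := Finset.mem_Ioo.1 hu
  rcases le_or_gt u n with hun | hnu
  · exact ha u (Finset.mem_Ioc.2 ⟨hmu, hun⟩) hFu
  · exact ⟨u, Finset.mem_Ioo.2 ⟨hnu, hua⟩, dvd_rfl⟩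

theorem eventually_eval_pos_of_leadingCoeff_pos {F : ℤ[X]} (hlead : 0 < F.leadingCoeff) :
    ∀ᶠ a in atTop, 0 < F.eval a := by
  rcases Nat.eq_zero_or_pos F.natDegree with hdeg | hdeg
  · rw [eq_C_of_natDegree_eq_zero hdeg, leadingCoeff_C] at hlead
    rw [eq_C_of_natDegree_eq_zero hdeg]
    exact .of_forall fun a => by rwa [eval_C]
  · have h_tendsto : Tendsto (fun x : ℝ => (F.map (Int.castRingHom ℝ)).eval x) atTop atTop := by
      refine tendsto_atTop_of_leadingCoeff_nonneg _ ?_ ?_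
      · rwa [degree_map_eq_of_injective Int.cast_injective, ← natDegree_pos_iff_degree_pos]
      · rw [leadingCoeff_map_of_injective Int.cast_injective]
        simpa using hlead.le
    filter_upwards [(h_tendsto.comp tendsto_intCast_atTop_atTop).eventually_gt_atTop 0] with a ha
    simpa [eval_intCast_map] using ha

theorem not_visibleAlong_iff {F : ℤ[X]} {a h : ℤ} (ha : 0 < F.eval a) (hh : 0 < h) :
    ¬ VisibleAlong F a h ↔
      ∃ u ∈ Finset.Ioo 0 a, 0 < F.eval u ∧ F.eval a ∣ h * F.eval u := by
  have haQ : ((F.eval a : ℤ) : ℚ) ≠ 0 := by exact_mod_cast ha.ne'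
  have slope_iff (t : ℚ) : (h : ℚ) = t * (F.eval a : ℤ) ↔ t = h / (F.eval a : ℤ) := by
    rw [eq_div_iff haQ, eq_comm]
  have value_iff (u : ℤ) : (∃ k : ℤ, 0 < k ∧ (k : ℚ) = h / (F.eval a : ℤ) * (F.eval u : ℤ)) ↔
      0 < F.eval u ∧ F.eval a ∣ h * F.eval u := by
    have clear_denom (k : ℤ) :
        (k : ℚ) = h / (F.eval a : ℤ) * (F.eval u : ℤ) ↔ h * F.eval u = F.eval a * k := by
      rw [div_mul_eq_mul_div, eq_div_iff haQ, mul_comm, eq_comm]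
      norm_cast
    simp only [clear_denom]
    constructor
    · rintro ⟨k, hk, hku⟩
      exact ⟨pos_of_mul_pos_right (hku ▸ mul_pos ha hk) hh.le, k, hku⟩
    · rintro ⟨hu, k, hku⟩
      exact ⟨k, pos_of_mul_pos_right (hku ▸ mul_pos hh hu) ha.le, hku⟩
  simp only [VisibleAlong, slope_iff, exists_eq_left, value_iff, Finset.mem_Ioo]
  push Not
  exact exists_congr fun u => by tauto

theorem card_filter_dvd_mul_le {A : ℤ} (hA : 0 < A) (D : ℤ) (N : ℕ) :
    (#{h ∈ Finset.Ioc (0 : ℤ) N | A ∣ h * D} : ℝ) ≤ N * (Int.gcd A D / A) := by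
  have hg : (0 : ℤ) < Int.gcd A D := mod_cast Int.gcd_pos_of_ne_zero_left D hA.ne'
  obtain ⟨q, hq⟩ : (Int.gcd A D : ℤ) ∣ A := Int.gcd_dvd_left ..
  have hq_pos : 0 < q := pos_of_mul_pos_right (hq ▸ hA) hg.le
  have dvd_iff (h : ℤ) : A ∣ h * D ↔ q ∣ h := by
    rw [← Int.dvd_mul_gcd_iff_dvd_mul, mul_comm h]
    conv_lhs => lhs; rw [hq]
    exact mul_dvd_mul_iff_left hg.ne'
  have hq_posQ : (0 : ℚ) < q := mod_cast hq_pos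
  have h_card : (#{h ∈ Finset.Ioc (0 : ℤ) N | q ∣ h} : ℤ) ≤ ⌊(N : ℚ) / q⌋ := by
    have h_nonneg : 0 ≤ ⌊(N : ℚ) / q⌋ := Int.floor_nonneg.2 (by positivity)
    simp [Int.Ioc_filter_dvd_card _ _ hq_pos, h_nonneg]
  have h_ratio : (Int.gcd A D / A : ℝ) = 1 / q := by
    have hgR : (Int.gcd A D : ℝ) ≠ 0 := mod_cast hg.ne'
    rw [show (A : ℝ) = Int.gcd A D * q by exact_mod_cast hq, div_mul_cancel_left₀ hgR, one_div]
  simp only [dvd_iff]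
  rw [h_ratio, mul_one_div, le_div_iff₀ (mod_cast hq_pos)]
  exact_mod_cast (le_div_iff₀ hq_posQ).1 (Int.le_floor.1 h_card)

open Classical in
/-- The vertical slice at abscissa `a` of the points in `[1,N]²` that are invisible along `F`. -/
noncomputable def invisibleColumn (F : ℤ[X]) (N : ℕ) (a : ℤ) : Finset ℤ :=
  {h ∈ Finset.Ioc (0 : ℤ) N | ¬ VisibleAlong F a h}

theorem mem_invisibleColumn {F : ℤ[X]} {N : ℕ} {a h : ℤ} :
    h ∈ invisibleColumn F N a ↔ h ∈ Finset.Ioc (0 : ℤ) N ∧ ¬ VisibleAlong F a h := by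
  simp only [invisibleColumn, Finset.mem_filter]

/-- The inner sum `Σ_{n < b < a} gcd(F(a),F(b))/F(a)` of `SF`. Up to the factor `N` it bounds the
invisible column at `a`, but only for large `a`: when `F(a) ≤ 0` it is nonpositive. -/
noncomputable def gcdColumnSum (F : ℤ[X]) (n a : ℤ) : ℝ :=
  ∑ b ∈ Finset.Ioo n a, (Int.gcd (F.eval a) (F.eval b) : ℝ) / ((F.eval a : ℤ) : ℝ)

theorem ncard_invisibleSet (F : ℤ[X]) (N : ℕ) :
    (invisibleSet F N).ncard = ∑ a ∈ Finset.Icc (1 : ℤ) N, #(invisibleColumn F N a) := by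
  have h_sigma : invisibleSet F N =
      ((Finset.Icc (1 : ℤ) N).sigma (invisibleColumn F N)).map
        (Equiv.sigmaEquivProd ℤ ℤ).toEmbedding := by
    ext ⟨a, h⟩
    simp [invisibleSet, mem_invisibleColumn, Int.lt_iff_add_one_le, and_assoc]
  rw [h_sigma, Set.ncard_coe_finset, Finset.card_map, Finset.card_sigma]

theorem card_invisibleColumn_le (F : ℤ[X]) (N : ℕ) (a : ℤ) : #(invisibleColumn F N a) ≤ N := by
  simpa using Finset.card_le_card fun h hh => (mem_invisibleColumn (F := F) (a := a).1 hh).1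

theorem eventually_card_invisibleColumn_le {F : ℤ[X]} (hlead : 0 < F.leadingCoeff) (n : ℤ) :
    ∀ᶠ a in atTop, ∀ N : ℕ, (#(invisibleColumn F N a) : ℝ) ≤ N * gcdColumnSum F n a := by
  filter_upwards [eventually_eval_pos_of_leadingCoeff_pos hlead,
    eventually_exists_mem_Ioo_eval_dvd_eval F 0 n] with a ha h_trade N
  have h_cover : invisibleColumn F N a ⊆ (Finset.Ioo n a).biUnion fun b =>
      {h ∈ Finset.Ioc (0 : ℤ) N | F.eval a ∣ h * F.eval b} := by
    intro h hh
    obtain ⟨hhN, h_inv⟩ := mem_invisibleColumn.1 hh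
    obtain ⟨u, hu, hFu, hdvd⟩ := (not_visibleAlong_iff ha (Finset.mem_Ioc.1 hhN).1).1 h_inv
    obtain ⟨b, hb, hub⟩ := h_trade u hu hFu.ne'
    exact Finset.mem_biUnion.2
      ⟨b, hb, Finset.mem_filter.2 ⟨hhN, hdvd.trans (mul_dvd_mul_left h hub)⟩⟩
  calc (#(invisibleColumn F N a) : ℝ)
      ≤ ∑ b ∈ Finset.Ioo n a,
          (#{h ∈ Finset.Ioc (0 : ℤ) N | F.eval a ∣ h * F.eval b} : ℝ) :=
        mod_cast (Finset.card_le_card h_cover).trans Finset.card_biUnion_le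
    _ ≤ ∑ b ∈ Finset.Ioo n a, N * ((Int.gcd (F.eval a) (F.eval b) : ℝ) / ((F.eval a : ℤ) : ℝ)) :=
        Finset.sum_le_sum fun b _ => card_filter_dvd_mul_le ha (F.eval b) N
    _ = N * gcdColumnSum F n a := (Finset.mul_sum ..).symm

theorem invisible_le_SF_general (F : ℤ[X]) (hlead : 0 < F.leadingCoeff) (n : ℤ) :
    ∃ C : ℝ, ∀ N : ℕ, ((invisibleSet F N).ncard : ℝ) ≤ N * SF F n N + C * N := by
  obtain ⟨B, hB⟩ := (eventually_card_invisibleColumn_le hlead n).exists_forall_of_atTop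
  let defect (a : ℤ) : ℝ := |1 - gcdColumnSum F n a|
  refine ⟨∑ a ∈ Finset.Ico 1 B, defect a, fun N => ?_⟩
  have h_column (a : ℤ) : (#(invisibleColumn F N a) : ℝ) ≤
      N * (gcdColumnSum F n a + if a < B then defect a else 0) := by
    split_ifs with haB
    · calc (#(invisibleColumn F N a) : ℝ) ≤ N * 1 := by
            simpa using card_invisibleColumn_le F N a
        _ ≤ N * (gcdColumnSum F n a + defect a) := by
            gcongr
            linarith [le_abs_self (1 - gcdColumnSum F n a)]
    · simpa using hB a (not_lt.1 haB) N
  have h_defect : ∑ a ∈ Finset.Icc (1 : ℤ) N, (if a < B then defect a else 0) ≤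
      ∑ a ∈ Finset.Ico 1 B, defect a := by
    rw [← Finset.sum_filter]
    refine Finset.sum_le_sum_of_subset_of_nonneg (fun a ha => ?_) fun a _ _ => abs_nonneg _
    simp only [Finset.mem_filter, Finset.mem_Icc] at ha
    exact Finset.mem_Ico.2 ⟨ha.1.1, ha.2⟩
  calc ((invisibleSet F N).ncard : ℝ)
      = ∑ a ∈ Finset.Icc (1 : ℤ) N, (#(invisibleColumn F N a) : ℝ) := by
        rw [ncard_invisibleSet, Nat.cast_sum]
    _ ≤ ∑ a ∈ Finset.Icc (1 : ℤ) N,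
          N * (gcdColumnSum F n a + if a < B then defect a else 0) :=
        Finset.sum_le_sum fun a _ => h_column a
    _ = N * (SF F n N + ∑ a ∈ Finset.Icc (1 : ℤ) N, if a < B then defect a else 0) := by
        rw [← Finset.mul_sum, Finset.sum_add_distrib]
        rfl
    _ ≤ N * (SF F n N + ∑ a ∈ Finset.Ico 1 B, defect a) := by gcongr
    _ = N * SF F n N + (∑ a ∈ Finset.Ico 1 B, defect a) * N := by ring

theorem invisible_le_SF
    (F : Polynomial ℤ) (hdeg : 1 ≤ F.natDegree) (hlead : 0 < F.leadingCoeff)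
    (nF : ℤ) (hnF : 0 < nF)
    (hnFprop : ∀ a b : ℤ, nF < a → 1 ≤ b → b < a →
      F.eval b < F.eval a ∧ 0 < F.eval a) :
    ∃ C : ℝ, ∀ N : ℕ, 0 < N →
      ((invisibleSet F N).ncard : ℝ) ≤ (N : ℝ) * SF F nF N + C * (N : ℝ) :=
  (invisible_le_SF_general F hlead nF).imp fun _ hC N _ => hC N
end

section
/- Let F ∈ ℤ[x] be a nonconstant polynomial with positive leading coefficient and let n_F be as in the context. If S_F(N)/N tends to 0 as N → ∞, then the set of lattice points visible along F has density 1, i.e., #Visible_F(N)/N² tends to 1 as N → ∞. -/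
open Polynomial Filter

/-!
Fix a column `a > n_F`, so that `F(a) > 0`. The point `(a, h)` is invisible exactly when some
`0 < b < a` with `F(b) > 0` satisfies `F(a) ∣ h F(b)`, that is, when `F(a) / gcd(F(a), F(b))`
divides `h`. For each `b` this happens for at most `N gcd(F(a), F(b)) / F(a)` heights `h ≤ N`.
The `b > n_F` contribute the inner sum of `S_F`. For the finitely many `b ≤ n_F` the gcd is at most
`F(b)`, so together they contribute `O(N / F(a))`, which is negligible on average over `a` because
`F(a) → ∞`.
-/

section Counting

theorem natCast_card_Ioc_filter_dvd_le {d : ℤ} (hd : 0 < d) (N : ℕ) :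
    (((Finset.Ioc 0 (N : ℤ)).filter (d ∣ ·)).card : ℝ) ≤ N / d := by
  have card_eq_floor : (((Finset.Ioc 0 (N : ℤ)).filter (d ∣ ·)).card : ℤ) = ⌊(N : ℚ) / d⌋ := by
    rw [Int.Ioc_filter_dvd_card 0 N hd]
    simpa using Int.floor_nonneg.2 (div_nonneg N.cast_nonneg (Int.cast_nonneg (R := ℚ) hd.le))
  have card_le : (((Finset.Ioc 0 (N : ℤ)).filter (d ∣ ·)).card : ℚ) ≤ N / d := by
    calc (((Finset.Ioc 0 (N : ℤ)).filter (d ∣ ·)).card : ℚ) = (⌊(N : ℚ) / d⌋ : ℚ) := by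
          exact_mod_cast card_eq_floor
      _ ≤ N / d := Int.floor_le _
  exact_mod_cast card_le

theorem ediv_gcd_dvd_of_dvd_mul {A B h : ℤ} (hA : A ≠ 0) (hdvd : A ∣ h * B) :
    A / Int.gcd A B ∣ h := by
  have hgcd : (Int.gcd A B : ℤ) ≠ 0 := by simp [Int.gcd_eq_zero_iff, hA]
  rw [← Int.dvd_mul_gcd_iff_dvd_mul] at hdvd
  rwa [← mul_dvd_mul_iff_right hgcd, Int.ediv_mul_cancel (Int.gcd_dvd_left _ _)]

theorem natCast_card_Icc_filter_dvd_mul_le {A : ℤ} (hA : 0 < A) (B : ℤ) (N : ℕ) :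
    (((Finset.Icc 1 (N : ℤ)).filter (A ∣ · * B)).card : ℝ) ≤ N * ((Int.gcd A B : ℝ) / A) := by
  have hquot : 0 < A / Int.gcd A B :=
    Int.ediv_pos_of_pos_of_dvd hA (Int.natCast_nonneg _) (Int.gcd_dvd_left _ _)
  have hsub : (Finset.Icc 1 (N : ℤ)).filter (A ∣ · * B) ⊆
      (Finset.Ioc 0 (N : ℤ)).filter (A / Int.gcd A B ∣ ·) := by
    intro h hh
    rw [Finset.mem_filter, Finset.mem_Icc] at hh
    rw [Finset.mem_filter, Finset.mem_Ioc]
    exact ⟨hh.1, ediv_gcd_dvd_of_dvd_mul hA.ne' hh.2⟩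
  calc (((Finset.Icc 1 (N : ℤ)).filter (A ∣ · * B)).card : ℝ)
      ≤ ((Finset.Ioc 0 (N : ℤ)).filter (A / Int.gcd A B ∣ ·)).card := by
        exact_mod_cast Finset.card_le_card hsub
    _ ≤ N / (A / Int.gcd A B : ℤ) := natCast_card_Ioc_filter_dvd_le hquot N
    _ = N * ((Int.gcd A B : ℝ) / A) := by
        rw [Int.cast_div_charZero (Int.gcd_dvd_left _ _), Int.cast_natCast, div_eq_mul_inv, inv_div]

end Counting

section Limits

theorem sum_Icc_one_natCast {M : Type*} [AddCommMonoid M] (g : ℤ → M) (N : ℕ) :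
    ∑ a ∈ Finset.Icc 1 (N : ℤ), g a = ∑ i ∈ Finset.range N, g (i + 1) := by
  refine Finset.sum_nbij' (fun a => (a - 1).toNat) (fun i => (i : ℤ) + 1) ?_ ?_ ?_ ?_ ?_ <;>
    intro x hx <;> simp only [Finset.mem_range, Finset.mem_Icc] at hx ⊢
  · omega
  · omega
  · omega
  · omega
  · congr 1
    omega

theorem tendsto_sum_Icc_one_div_natCast {g : ℤ → ℝ} {l : ℝ} (hg : Tendsto g atTop (nhds l)) :
    Tendsto (fun N : ℕ => (∑ a ∈ Finset.Icc 1 (N : ℤ), g a) / N) atTop (nhds l) := by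
  have hshift : Tendsto (fun i : ℕ => g (i + 1)) atTop (nhds l) :=
    hg.comp (tendsto_atTop_add_const_right _ 1 tendsto_natCast_atTop_atTop)
  refine hshift.cesaro.congr fun N => ?_
  rw [sum_Icc_one_natCast, div_eq_inv_mul]

theorem tendsto_eval_atTop_of_leadingCoeff_pos {F : ℤ[X]} (hdeg : 1 ≤ F.natDegree)
    (hlead : 0 < F.leadingCoeff) : Tendsto (fun a : ℤ => F.eval a) atTop atTop := by
  have hinj : Function.Injective (Int.castRingHom ℝ) := Int.cast_injective
  have hreal : Tendsto (fun x : ℝ => (F.map (Int.castRingHom ℝ)).eval x) atTop atTop := by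
    refine Polynomial.tendsto_atTop_of_leadingCoeff_nonneg _ ?_ ?_
    · rw [degree_map_eq_of_injective hinj]
      exact natDegree_pos_iff_degree_pos.1 hdeg
    · rw [leadingCoeff_map_of_injective hinj]
      exact Int.cast_nonneg hlead.le
  rw [← tendsto_intCast_atTop_iff (R := ℝ)]
  simpa [Function.comp_def] using hreal.comp tendsto_intCast_atTop_atTop

end Limits

/-- Visibility of the lattice point `(a, h)` along an arbitrary function `f : ℤ → ℤ`; for
`f = F.eval` this is `VisibleAlong F`. -/
def IsVisibleAlong (f : ℤ → ℤ) (a h : ℤ) : Prop :=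
  ∃ t : ℚ, (h : ℚ) = t * (f a : ℚ) ∧
    ∀ u : ℤ, 0 < u → (∃ k : ℤ, 0 < k ∧ (k : ℚ) = t * (f u : ℚ)) → a ≤ u

/-- The lattice points of `[1, N]²` visible along `f`; for `f = F.eval` this is `visibleSet F N`. -/
def visiblePoints (f : ℤ → ℤ) (N : ℕ) : Set (ℤ × ℤ) :=
  {p | 1 ≤ p.1 ∧ p.1 ≤ (N : ℤ) ∧ 1 ≤ p.2 ∧ p.2 ≤ (N : ℤ) ∧ IsVisibleAlong f p.1 p.2}

open Classical in
/-- The heights `h ∈ [1, N]` at which column `a` has a point invisible along `f`. -/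
noncomputable def invisibleHeights (f : ℤ → ℤ) (N : ℕ) (a : ℤ) : Finset ℤ :=
  (Finset.Icc 1 (N : ℤ)).filter fun h => ¬ IsVisibleAlong f a h

/-- The contribution of column `a` to the gcd sum `S_f`. -/
noncomputable def columnGcdSum (f : ℤ → ℤ) (n a : ℤ) : ℝ :=
  ∑ b ∈ Finset.Ioo n a, (Int.gcd (f a) (f b) : ℝ) / (f a : ℝ)

/-- The share of invisible points in column `a` not accounted for by `columnGcdSum f n a`: columns
`a ≤ n` are given up entirely, and in the others every `b ∈ [1, n]` costs at most `|f b| / f a`. -/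
noncomputable def columnError (f : ℤ → ℤ) (n a : ℤ) : ℝ :=
  if a ≤ n then 1 else (∑ b ∈ Finset.Icc 1 n, |(f b : ℝ)|) / f a

section Visibility

variable {f : ℤ → ℤ} {n a : ℤ}

theorem exists_dvd_mul_of_not_isVisibleAlong {h : ℤ} (ha : 0 < f a) (hh : 0 < h)
    (hinv : ¬ IsVisibleAlong f a h) : ∃ b ∈ Finset.Ioo 0 a, 0 < f b ∧ f a ∣ h * f b := by
  have haQ : (f a : ℚ) ≠ 0 := by exact_mod_cast ha.ne'
  simp only [IsVisibleAlong, not_exists, not_and, not_forall, not_le] at hinv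
  obtain ⟨b, hb, ⟨k, hk, hkb⟩, hba⟩ := hinv (h / f a) (div_mul_cancel₀ _ haQ).symm
  have hmul : h * f b = f a * k := by
    have : (h : ℚ) * f b = f a * k := by rw [hkb]; field_simp
    exact_mod_cast this
  have hfb : 0 < f b := pos_of_mul_pos_right (hmul ▸ mul_pos ha hk) hh.le
  exact ⟨b, Finset.mem_Ioo.2 ⟨hb, hba⟩, hfb, k, hmul⟩

theorem card_invisibleHeights_le (N : ℕ) : (invisibleHeights f N a).card ≤ N := by
  classical
  calc (invisibleHeights f N a).card ≤ (Finset.Icc 1 (N : ℤ)).card := Finset.card_filter_le _ _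
    _ = N := by simp

theorem card_invisibleHeights_le_sum_gcd (ha : 0 < f a) (N : ℕ) :
    ((invisibleHeights f N a).card : ℝ) ≤
      N * ∑ b ∈ Finset.Ioo 0 a with 0 < f b, (Int.gcd (f a) (f b) : ℝ) / f a := by
  classical
  have hsub : invisibleHeights f N a ⊆ {b ∈ Finset.Ioo 0 a | 0 < f b}.biUnion
      fun b => (Finset.Icc 1 (N : ℤ)).filter (f a ∣ · * f b) := by
    intro h hh
    obtain ⟨hN, hinv⟩ := Finset.mem_filter.1 hh
    obtain ⟨b, hb, hfb, hdvd⟩ :=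
      exists_dvd_mul_of_not_isVisibleAlong ha (Finset.mem_Icc.1 hN).1 hinv
    exact Finset.mem_biUnion.2
      ⟨b, Finset.mem_filter.2 ⟨hb, hfb⟩, Finset.mem_filter.2 ⟨hN, hdvd⟩⟩
  calc ((invisibleHeights f N a).card : ℝ)
      ≤ ∑ b ∈ Finset.Ioo 0 a with 0 < f b,
          (((Finset.Icc 1 (N : ℤ)).filter (f a ∣ · * f b)).card : ℝ) := by
        exact_mod_cast (Finset.card_le_card hsub).trans Finset.card_biUnion_le
    _ ≤ ∑ b ∈ Finset.Ioo 0 a with 0 < f b, N * ((Int.gcd (f a) (f b) : ℝ) / f a) :=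
        Finset.sum_le_sum fun b _ => natCast_card_Icc_filter_dvd_mul_le ha (f b) N
    _ = N * ∑ b ∈ Finset.Ioo 0 a with 0 < f b, (Int.gcd (f a) (f b) : ℝ) / f a :=
        (Finset.mul_sum _ _ _).symm

theorem sum_gcd_div_le_sum_abs_div (s : Finset ℤ) (ha : 0 < f a) :
    ∑ b ∈ s with 0 < f b, (Int.gcd (f a) (f b) : ℝ) / f a ≤ (∑ b ∈ s, |(f b : ℝ)|) / f a := by
  rw [← Finset.sum_div]
  refine div_le_div_of_nonneg_right ?_ (Int.cast_nonneg ha.le)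
  calc ∑ b ∈ s with 0 < f b, (Int.gcd (f a) (f b) : ℝ)
      ≤ ∑ b ∈ s with 0 < f b, |(f b : ℝ)| := by
        refine Finset.sum_le_sum fun b hb => ?_
        have hgcd : (Int.gcd (f a) (f b) : ℤ) ≤ |f b| :=
          (Int.le_of_dvd (Finset.mem_filter.1 hb).2 (Int.gcd_dvd_right _ _)).trans (le_abs_self _)
        exact_mod_cast hgcd
    _ ≤ ∑ b ∈ s, |(f b : ℝ)| :=
        Finset.sum_le_sum_of_subset_of_nonneg (Finset.filter_subset _ _)
          fun _ _ _ => abs_nonneg _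

theorem sum_gcd_div_le_columnGcdSum_add_columnError (hna : n < a) (ha : 0 < f a) :
    ∑ b ∈ Finset.Ioo 0 a with 0 < f b, (Int.gcd (f a) (f b) : ℝ) / f a ≤
      columnGcdSum f n a + columnError f n a := by
  have hnonneg (b : ℤ) : 0 ≤ (Int.gcd (f a) (f b) : ℝ) / f a :=
    div_nonneg (Nat.cast_nonneg _) (Int.cast_nonneg ha.le)
  have hdisj : Disjoint (Finset.Ioo n a) {b ∈ Finset.Icc 1 n | 0 < f b} := by
    rw [Finset.disjoint_left]
    intro b hlarge hsmall
    simp only [Finset.mem_filter, Finset.mem_Icc, Finset.mem_Ioo] at hlarge hsmall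
    omega
  have hsub : {b ∈ Finset.Ioo 0 a | 0 < f b} ⊆
      Finset.Ioo n a ∪ {b ∈ Finset.Icc 1 n | 0 < f b} := by
    intro b hb
    simp only [Finset.mem_union, Finset.mem_filter, Finset.mem_Icc, Finset.mem_Ioo] at hb ⊢
    omega
  calc ∑ b ∈ Finset.Ioo 0 a with 0 < f b, (Int.gcd (f a) (f b) : ℝ) / f a
      ≤ ∑ b ∈ Finset.Ioo n a ∪ {b ∈ Finset.Icc 1 n | 0 < f b},
          (Int.gcd (f a) (f b) : ℝ) / f a :=
        Finset.sum_le_sum_of_subset_of_nonneg hsub fun b _ _ => hnonneg b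
    _ = columnGcdSum f n a +
          ∑ b ∈ Finset.Icc 1 n with 0 < f b, (Int.gcd (f a) (f b) : ℝ) / f a :=
        Finset.sum_union hdisj
    _ ≤ columnGcdSum f n a + columnError f n a := by
        rw [columnError, if_neg hna.not_ge]
        gcongr
        exact sum_gcd_div_le_sum_abs_div _ ha

theorem card_invisibleHeights_le_columnGcdSum_add_columnError (hpos : n < a → 0 < f a) (N : ℕ) :
    ((invisibleHeights f N a).card : ℝ) ≤ N * (columnGcdSum f n a + columnError f n a) := by
  rcases le_or_gt a n with han | hna
  · rw [columnGcdSum, Finset.Ioo_eq_empty han.not_gt, Finset.sum_empty, columnError, if_pos han,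
      zero_add, mul_one]
    exact_mod_cast card_invisibleHeights_le N
  · calc ((invisibleHeights f N a).card : ℝ)
        ≤ N * ∑ b ∈ Finset.Ioo 0 a with 0 < f b, (Int.gcd (f a) (f b) : ℝ) / f a :=
          card_invisibleHeights_le_sum_gcd (hpos hna) N
      _ ≤ N * (columnGcdSum f n a + columnError f n a) := by
          gcongr
          exact sum_gcd_div_le_columnGcdSum_add_columnError hna (hpos hna)

theorem tendsto_columnError (hf : Tendsto f atTop atTop) (n : ℤ) :
    Tendsto (columnError f n) atTop (nhds 0) := by
  have hdiv : Tendsto (fun a => (∑ b ∈ Finset.Icc 1 n, |(f b : ℝ)|) / (f a : ℝ)) atTop (nhds 0) :=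
    (tendsto_intCast_atTop_atTop.comp hf).const_div_atTop _
  refine hdiv.congr' ?_
  filter_upwards [eventually_gt_atTop n] with a ha
  rw [columnError, if_neg ha.not_ge]

theorem ncard_visiblePoints_add_sum_card_invisibleHeights (f : ℤ → ℤ) (N : ℕ) :
    (visiblePoints f N).ncard + ∑ a ∈ Finset.Icc 1 (N : ℤ), (invisibleHeights f N a).card =
      N ^ 2 := by
  classical
  let box := Finset.Icc 1 (N : ℤ) ×ˢ Finset.Icc 1 (N : ℤ)
  have hvisible : visiblePoints f N = ↑(box.filter fun p => IsVisibleAlong f p.1 p.2) := by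
    ext p
    simp only [visiblePoints, box, Set.mem_ofPred_eq, Finset.coe_filter, Finset.mem_product,
      Finset.mem_Icc, and_assoc]
  have hinvisible : ∑ a ∈ Finset.Icc 1 (N : ℤ), (invisibleHeights f N a).card =
      (box.filter fun p => ¬ IsVisibleAlong f p.1 p.2).card := by
    simp only [invisibleHeights, box, Finset.card_filter, Finset.sum_product]
  rw [hvisible, hinvisible, Set.ncard_coe_finset, Finset.card_filter_add_card_filter_not]
  simp [box, sq]

theorem tendsto_sum_card_invisibleHeights_div_sq (hf : Tendsto f atTop atTop)
    (hpos : ∀ a, n < a → 0 < f a)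
    (hsum : Tendsto (fun N : ℕ => (∑ a ∈ Finset.Icc 1 (N : ℤ), columnGcdSum f n a) / N)
      atTop (nhds 0)) :
    Tendsto (fun N : ℕ =>
      (∑ a ∈ Finset.Icc 1 (N : ℤ), ((invisibleHeights f N a).card : ℝ)) / (N : ℝ) ^ 2)
      atTop (nhds 0) := by
  have hbound := hsum.add (tendsto_sum_Icc_one_div_natCast (tendsto_columnError hf n))
  rw [add_zero] at hbound
  refine squeeze_zero (fun N => by positivity) (fun N => ?_) hbound
  calc (∑ a ∈ Finset.Icc 1 (N : ℤ), ((invisibleHeights f N a).card : ℝ)) / (N : ℝ) ^ 2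
      ≤ (∑ a ∈ Finset.Icc 1 (N : ℤ), N * (columnGcdSum f n a + columnError f n a)) /
          (N : ℝ) ^ 2 := by
        gcongr with a
        exact card_invisibleHeights_le_columnGcdSum_add_columnError (hpos a) N
    _ = (∑ a ∈ Finset.Icc 1 (N : ℤ), columnGcdSum f n a) / N +
          (∑ a ∈ Finset.Icc 1 (N : ℤ), columnError f n a) / N := by
        rw [← Finset.mul_sum, Finset.sum_add_distrib]
        rcases N.eq_zero_or_pos with rfl | hN
        · simp
        · field_simp

end Visibility

theorem SF_small_implies_density_one_general {f : ℤ → ℤ} (hf : Tendsto f atTop atTop) {n : ℤ}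
    (hpos : ∀ a, n < a → 0 < f a)
    (hsum : Tendsto (fun N : ℕ => (∑ a ∈ Finset.Icc 1 (N : ℤ), columnGcdSum f n a) / N)
      atTop (nhds 0)) :
    Tendsto (fun N : ℕ => ((visiblePoints f N).ncard : ℝ) / (N : ℝ) ^ 2) atTop (nhds 1) := by
  have hlim := (tendsto_sum_card_invisibleHeights_div_sq hf hpos hsum).const_sub 1
  rw [sub_zero] at hlim
  refine hlim.congr' ?_
  filter_upwards [eventually_gt_atTop 0] with N hN
  have hpartition : ((visiblePoints f N).ncard : ℝ) +
      ∑ a ∈ Finset.Icc 1 (N : ℤ), ((invisibleHeights f N a).card : ℝ) = (N : ℝ) ^ 2 := by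
    exact_mod_cast ncard_visiblePoints_add_sum_card_invisibleHeights f N
  have hsq : (N : ℝ) ^ 2 ≠ 0 := by positivity
  rw [eq_div_iff hsq, sub_mul, div_mul_cancel₀ _ hsq]
  linarith

theorem SF_small_implies_density_one
    (F : Polynomial ℤ) (hdeg : 1 ≤ F.natDegree) (hlead : 0 < F.leadingCoeff)
    (nF : ℤ) (hnF : 0 < nF)
    (hnFprop : ∀ a b : ℤ, nF < a → 1 ≤ b → b < a →
      F.eval b < F.eval a ∧ 0 < F.eval a)
    (hSF : Tendsto (fun N : ℕ => SF F nF N / (N : ℝ)) atTop (nhds 0)) :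
    Tendsto (fun N : ℕ => ((visibleSet F N).ncard : ℝ) / (N : ℝ) ^ 2)
      atTop (nhds 1) := by
  exact SF_small_implies_density_one_general (f := fun a => F.eval a)
    (tendsto_eval_atTop_of_leadingCoeff_pos hdeg hlead)
    (fun a ha => (hnFprop a 1 ha le_rfl (by omega)).2) hSF
end

section
/- Let f ∈ ℤ[x] be a polynomial of degree d ≥ 2 having at least two distinct roots in an algebraic closure K of ℚ, and let r, s be positive integers with r < s. Then the polynomial G_{s,r}(x,y) = s·f(y) − r·f(x), viewed as a polynomial in two variables over K, has no factor of total degree 1; that is, there is no polynomial L(x,y) = αx + βy + γ with α, β, γ ∈ K not all zero and L of total degree 1 dividing G_{s,r}(x,y) in K[x,y]. -/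
open Polynomial MvPolynomial

/-- `G_{s,r}(x,y) = s·f(y) − r·f(x)`, viewed as a polynomial in the two variables
`X 0 = x`, `X 1 = y` with coefficients in `K`. -/
noncomputable def GpolyK (K : Type*) [CommRing K] (f : Polynomial ℤ) (s r : ℤ) :
    MvPolynomial (Fin 2) K :=
  (s : MvPolynomial (Fin 2) K) * Polynomial.aeval (MvPolynomial.X 1) f -
    (r : MvPolynomial (Fin 2) K) * Polynomial.aeval (MvPolynomial.X 0) f

/-!
Solving the equation of the line for one variable turns a linear factor of `s·f(y) − r·f(x)` into an
identity `f ∘ q = c·f` with `q` affine and `c = r / s` or `c = s / r`. If `a` is the slope of `q`,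
comparing leading coefficients gives `c = a ^ deg f`. Since `q` maps roots of `f` to roots of `f`,
multiplication by `a` preserves the finite set of differences of roots, which contains a nonzero
element because `f` has two distinct roots. Hence `a` is a root of unity, and so is `c`; but the
only rational roots of unity are `±1`.
-/

lemma isOfFinOrder_of_mapsTo_mul_left {M : Type*} [MonoidWithZero M] [IsCancelMulZero M]
    {S : Set M} (hS : S.Finite) {a x : M} (ha : a ≠ 0) (hx : x ≠ 0) (hxS : x ∈ S)
    (haS : Set.MapsTo (a * ·) S S) : IsOfFinOrder a := by
  have pow_mul_mem (n : ℕ) : a ^ n * x ∈ S := by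
    simpa only [mul_left_iterate] using haS.iterate n hxS
  obtain ⟨m, n, hmn, heq⟩ := hS.exists_lt_map_eq_of_forall_mem pow_mul_mem
  have pow_eq : a ^ m * a ^ (n - m) = a ^ m * 1 := by
    rw [← pow_add, Nat.add_sub_of_le hmn.le, mul_one]
    exact (mul_right_cancel₀ hx heq).symm
  exact isOfFinOrder_iff_pow_eq_one.mpr
    ⟨n - m, Nat.sub_pos_of_lt hmn, mul_left_cancel₀ (pow_ne_zero m ha) pow_eq⟩

section CommRing

variable {R : Type*} [CommRing R] {g q : R[X]} {c : R}

lemma leadingCoeff_mul_sub_of_natDegree_eq_one (hq : q.natDegree = 1) (u v : R) :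
    q.leadingCoeff * (u - v) = q.eval u - q.eval v := by
  rw [Polynomial.leadingCoeff, hq, eq_X_add_C_of_natDegree_le_one hq.le]
  simp [mul_sub]

lemma isRoot_eval_of_comp_eq_C_mul (h : g.comp q = Polynomial.C c * g) {u : R}
    (hu : g.IsRoot u) : g.IsRoot (q.eval u) := by
  rw [IsRoot, ← eval_comp, h, Polynomial.eval_mul, hu.eq_zero, mul_zero]

variable [IsDomain R]

lemma isOfFinOrder_leadingCoeff_of_mapsTo_eval (hq : q.natDegree = 1) {Z : Set R}
    (hZ : Z.Finite) (hZ_nontrivial : Z.Nontrivial) (hqZ : Set.MapsTo q.eval Z Z) :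
    IsOfFinOrder q.leadingCoeff := by
  obtain ⟨u, hu, v, hv, huv⟩ := hZ_nontrivial
  have leadingCoeff_ne : q.leadingCoeff ≠ 0 :=
    leadingCoeff_ne_zero.mpr (ne_zero_of_natDegree_gt (hq ▸ one_pos))
  have mapsTo_differences :
      Set.MapsTo (q.leadingCoeff * ·) (Set.image2 (· - ·) Z Z) (Set.image2 (· - ·) Z Z) := by
    rintro _ ⟨x, hx, y, hy, rfl⟩
    exact ⟨q.eval x, hqZ hx, q.eval y, hqZ hy,
      (leadingCoeff_mul_sub_of_natDegree_eq_one hq x y).symm⟩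
  exact isOfFinOrder_of_mapsTo_mul_left (hZ.image2 _ hZ) leadingCoeff_ne
    (sub_ne_zero.mpr huv) ⟨u, hu, v, hv, rfl⟩ mapsTo_differences

lemma natDegree_eq_one_of_comp_eq_C_mul (hg : g.natDegree ≠ 0) (hc : c ≠ 0)
    (h : g.comp q = Polynomial.C c * g) : q.natDegree = 1 := by
  have natDegree_mul_eq : g.natDegree * q.natDegree = g.natDegree * 1 := by
    rw [← natDegree_comp, h, natDegree_C_mul hc, mul_one]
  exact mul_left_cancel₀ hg natDegree_mul_eq

lemma leadingCoeff_pow_natDegree_eq_of_comp_eq_C_mul (hg : g.natDegree ≠ 0) (hc : c ≠ 0)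
    (h : g.comp q = Polynomial.C c * g) : q.leadingCoeff ^ g.natDegree = c := by
  have hq : q.natDegree ≠ 0 := by simp [natDegree_eq_one_of_comp_eq_C_mul hg hc h]
  have leadingCoeff_mul_eq : g.leadingCoeff * q.leadingCoeff ^ g.natDegree =
      g.leadingCoeff * c := by
    rw [← leadingCoeff_comp hq, h, Polynomial.leadingCoeff_mul, leadingCoeff_C, mul_comm]
  exact mul_left_cancel₀ (leadingCoeff_ne_zero.mpr (ne_zero_of_natDegree_gt hg.bot_lt))
    leadingCoeff_mul_eq

lemma isOfFinOrder_of_comp_eq_C_mul (hg : g ≠ 0) (hroots : {x | g.IsRoot x}.Nontrivial)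
    (hc : c ≠ 0) (h : g.comp q = Polynomial.C c * g) : IsOfFinOrder c := by
  obtain ⟨u, hu⟩ := hroots.nonempty
  have hdeg : g.natDegree ≠ 0 := (natDegree_pos_iff_degree_pos.mpr (degree_pos_of_root hg hu)).ne'
  have hq : q.natDegree = 1 := natDegree_eq_one_of_comp_eq_C_mul hdeg hc h
  rw [← leadingCoeff_pow_natDegree_eq_of_comp_eq_C_mul hdeg hc h]
  exact (isOfFinOrder_leadingCoeff_of_mapsTo_eval hq (finite_setOfPred_isRoot hg) hroots
    fun _ ↦ isRoot_eval_of_comp_eq_C_mul h).pow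

end CommRing

section Field

variable {K : Type*} [Field K]

lemma isOfFinOrder_div_of_C_mul_comp_eq {g q : K[X]} (hg : g ≠ 0)
    (hroots : {x | g.IsRoot x}.Nontrivial) {a b : K} (ha : a ≠ 0) (hb : b ≠ 0)
    (h : Polynomial.C b * g.comp q = Polynomial.C a * g) : IsOfFinOrder (a / b) := by
  refine isOfFinOrder_of_comp_eq_C_mul hg hroots (div_ne_zero ha hb) (q := q) ?_
  rw [← mul_right_inj' (Polynomial.C_ne_zero.mpr hb), h, ← mul_assoc, ← Polynomial.C_mul,
    mul_div_cancel₀ _ hb]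

lemma abs_eq_abs_of_isOfFinOrder_div [CharZero K] {m n : ℤ} (hn : n ≠ 0)
    (h : IsOfFinOrder (m / n : K)) : |m| = |n| := by
  obtain ⟨k, hk, hpow⟩ := isOfFinOrder_iff_pow_eq_one.mp h
  have pow_eq : m ^ k = n ^ k := by
    rw [div_pow, div_eq_one_iff_eq (pow_ne_zero k (Int.cast_ne_zero.mpr hn))] at hpow
    exact_mod_cast hpow
  rw [← pow_left_inj₀ (abs_nonneg m) (abs_nonneg n) hk.ne', ← abs_pow, ← abs_pow, pow_eq]

lemma exists_C_mul_add_C_mul_add_C_eq_zero (α γ : K) {β : K} (hβ : β ≠ 0) (p : K[X]) :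
    ∃ q : K[X], Polynomial.C α * p + Polynomial.C β * q + Polynomial.C γ = 0 := by
  refine ⟨-(Polynomial.C β⁻¹ * (Polynomial.C α * p + Polynomial.C γ)), ?_⟩
  have C_mul_C_inv : Polynomial.C β * Polynomial.C β⁻¹ = 1 := by
    rw [← Polynomial.C_mul, mul_inv_cancel₀ hβ, Polynomial.C_1]
  linear_combination -(Polynomial.C α * p + Polynomial.C γ) * C_mul_C_inv

end Field

lemma aeval_GpolyK {K A : Type*} [CommRing K] [CommRing A] [Algebra K A] (f : ℤ[X]) (s r : ℤ)
    (x : Fin 2 → A) :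
    MvPolynomial.aeval x (GpolyK K f s r) =
      s * Polynomial.aeval (x 1) (f.map (algebraMap ℤ K)) -
        r * Polynomial.aeval (x 0) (f.map (algebraMap ℤ K)) := by
  have aeval_aeval_X (i : Fin 2) : MvPolynomial.aeval x
      (Polynomial.aeval (MvPolynomial.X i : MvPolynomial (Fin 2) K) f) =
        Polynomial.aeval (x i) (f.map (algebraMap ℤ K)) := by
    rw [← Polynomial.aeval_map_algebraMap K, ← aeval_algHom_apply, MvPolynomial.aeval_X]
  simp only [GpolyK, map_sub, map_mul, map_intCast, aeval_aeval_X]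

lemma C_mul_comp_eq_of_linear_dvd_GpolyK {K : Type*} [CommRing K] {f : ℤ[X]} {s r : ℤ}
    {α β γ : K}
    (hdvd : MvPolynomial.C α * MvPolynomial.X 0 + MvPolynomial.C β * MvPolynomial.X 1 +
      MvPolynomial.C γ ∣ GpolyK K f s r)
    {p q : K[X]} (hpq : Polynomial.C α * p + Polynomial.C β * q + Polynomial.C γ = 0) :
    Polynomial.C (s : K) * (f.map (algebraMap ℤ K)).comp q =
      Polynomial.C (r : K) * (f.map (algebraMap ℤ K)).comp p := by
  have aeval_linear : MvPolynomial.aeval ![p, q] (MvPolynomial.C α * MvPolynomial.X 0 +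
      MvPolynomial.C β * MvPolynomial.X 1 + MvPolynomial.C γ) = 0 := by
    simpa [Polynomial.algebraMap_eq] using hpq
  have aeval_eq_zero : MvPolynomial.aeval ![p, q] (GpolyK K f s r) = 0 := by
    obtain ⟨Q, hQ⟩ := hdvd
    rw [hQ, map_mul, aeval_linear, zero_mul]
  rw [aeval_GpolyK, sub_eq_zero] at aeval_eq_zero
  simpa [comp_eq_aeval] using aeval_eq_zero

theorem no_linear_factor_over_closure_general {K : Type*} [Field K] [CharZero K]
    {f : ℤ[X]} (hf : f ≠ 0)
    (hroots : ∃ u v : K, u ≠ v ∧ Polynomial.aeval u f = 0 ∧ Polynomial.aeval v f = 0)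
    {r s : ℤ} (hr : r ≠ 0) (hs : s ≠ 0) (hrs : |r| ≠ |s|)
    {α β γ : K} (hαβ : α ≠ 0 ∨ β ≠ 0) :
    ¬ MvPolynomial.C α * MvPolynomial.X 0 + MvPolynomial.C β * MvPolynomial.X 1 +
      MvPolynomial.C γ ∣ GpolyK K f s r := by
  intro hdvd
  have hg : f.map (algebraMap ℤ K) ≠ 0 :=
    (Polynomial.map_ne_zero_iff (FaithfulSMul.algebraMap_injective ℤ K)).mpr hf
  have hg_roots : {x | (f.map (algebraMap ℤ K)).IsRoot x}.Nontrivial := by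
    obtain ⟨u, v, huv, hu, hv⟩ := hroots
    exact ⟨u, (eval_map_algebraMap f u).trans hu, v, (eval_map_algebraMap f v).trans hv, huv⟩
  have hrK : (r : K) ≠ 0 := Int.cast_ne_zero.mpr hr
  have hsK : (s : K) ≠ 0 := Int.cast_ne_zero.mpr hs
  rcases hαβ with hα | hβ
  · obtain ⟨p, hp⟩ := exists_C_mul_add_C_mul_add_C_eq_zero β γ hα Polynomial.X
    rw [add_comm (Polynomial.C β * _)] at hp
    have comp_eq := C_mul_comp_eq_of_linear_dvd_GpolyK hdvd hp
    rw [comp_X] at comp_eq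
    exact hrs (abs_eq_abs_of_isOfFinOrder_div hr
      (isOfFinOrder_div_of_C_mul_comp_eq hg hg_roots hsK hrK comp_eq.symm)).symm
  · obtain ⟨q, hq⟩ := exists_C_mul_add_C_mul_add_C_eq_zero α γ hβ Polynomial.X
    have comp_eq := C_mul_comp_eq_of_linear_dvd_GpolyK hdvd hq
    rw [comp_X] at comp_eq
    exact hrs (abs_eq_abs_of_isOfFinOrder_div hs
      (isOfFinOrder_div_of_C_mul_comp_eq hg hg_roots hrK hsK comp_eq))

theorem no_linear_factor_over_closure
    (f : Polynomial ℤ) (hd : 2 ≤ f.natDegree)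
    (hroots : ∃ α β : AlgebraicClosure ℚ, α ≠ β ∧
      Polynomial.aeval α f = 0 ∧ Polynomial.aeval β f = 0)
    (r s : ℤ) (hr : 0 < r) (hrs : r < s) :
    ¬ ∃ α β γ : AlgebraicClosure ℚ,
      ¬ (α = 0 ∧ β = 0 ∧ γ = 0) ∧
      (MvPolynomial.C α * MvPolynomial.X 0 + MvPolynomial.C β * MvPolynomial.X 1 +
        MvPolynomial.C γ : MvPolynomial (Fin 2) (AlgebraicClosure ℚ)).totalDegree = 1 ∧
      (MvPolynomial.C α * MvPolynomial.X 0 + MvPolynomial.C β * MvPolynomial.X 1 +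
        MvPolynomial.C γ) ∣ GpolyK (AlgebraicClosure ℚ) f s r := by
  rintro ⟨α, β, γ, -, hdeg, hdvd⟩
  have hαβ : α ≠ 0 ∨ β ≠ 0 := by
    contrapose! hdeg
    simp [hdeg]
  have habs : |r| < |s| := by rwa [abs_of_pos hr, abs_of_pos (hr.trans hrs)]
  exact no_linear_factor_over_closure_general (ne_zero_of_natDegree_gt hd) hroots
    hr.ne' (hr.trans hrs).ne' habs.ne hαβ hdvd
end

section
/- Let f ∈ ℤ[x] be a polynomial of degree d ≥ 2 having at least two distinct roots in an algebraic closure of ℚ, and let r, s be positive integers with r < s. Then the polynomial G_{s,r}(x,y) = s·f(y) − r·f(x), viewed as a polynomial in two variables with real coefficients, has no factor of total degree 1 in ℝ[x,y]; equivalently, every irreducible factor of G_{s,r}(x,y) in ℝ[x,y] has total degree at least 2. -/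
open Polynomial MvPolynomial

/-- `G_{s,r}(x,y) = s·f(y) − r·f(x)`, viewed as a polynomial in the two variables
`X 0 = x`, `X 1 = y` with real coefficients. -/
noncomputable def Gpoly (f : Polynomial ℤ) (s r : ℤ) : MvPolynomial (Fin 2) ℝ :=
  (s : MvPolynomial (Fin 2) ℝ) * Polynomial.aeval (MvPolynomial.X 1) f -
    (r : MvPolynomial (Fin 2) ℝ) * Polynomial.aeval (MvPolynomial.X 0) f

/-!
A line on which `s·f(y) − r·f(x)` vanishes cannot be vertical, since `f` is not constant, so it is
the graph of an affine map `x ↦ a x + b` with `s·f(a x + b) = r·f(x)`. Comparing leading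
coefficients gives `a ^ deg f = r / s`. The affine map sends the finite set of roots of `f` to
itself, and its iterates scale the difference of two distinct roots by the powers of `a`; these
therefore take finitely many values, so `a` is a root of unity. Hence so is `r / s`, which is
impossible for `0 < r < s`.
-/

section AffineMap

variable {R : Type*} [Ring R]

theorem iterate_affine_sub_iterate_affine (a b x y : R) (n : ℕ) :
    (fun z ↦ a * z + b)^[n] x - (fun z ↦ a * z + b)^[n] y = a ^ n * (x - y) := by
  induction n with
  | zero => simp
  | succ n ih =>
    simp only [Function.iterate_succ_apply', add_sub_add_right_eq_sub, ← mul_sub, ih, pow_succ',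
      mul_assoc]

theorem isOfFinOrder_of_mapsTo_affine [IsDomain R] {S : Set R} (hfin : S.Finite)
    (hS : S.Nontrivial) {a b : R} (ha : a ≠ 0) (hmaps : S.MapsTo (fun z ↦ a * z + b) S) :
    IsOfFinOrder a := by
  obtain ⟨x, hx, y, hy, hxy⟩ := hS
  obtain ⟨m, n, hmn, heq⟩ := Set.Finite.exists_lt_map_eq_of_forall_mem
    (f := fun n : ℕ ↦ ((fun z ↦ a * z + b)^[n] x, (fun z ↦ a * z + b)^[n] y))
    (fun n ↦ Set.mk_mem_prod (hmaps.iterate n hx) (hmaps.iterate n hy)) (hfin.prod hfin)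
  obtain ⟨hx_eq, hy_eq⟩ := Prod.mk.inj heq
  have hpow : a ^ m = a ^ n := by
    refine mul_right_cancel₀ (sub_ne_zero.2 hxy) ?_
    rw [← iterate_affine_sub_iterate_affine a b, ← iterate_affine_sub_iterate_affine a b, hx_eq,
      hy_eq]
  refine isOfFinOrder_iff_pow_eq_one.2 ⟨n - m, Nat.sub_pos_of_lt hmn, ?_⟩
  refine mul_left_cancel₀ (pow_ne_zero m ha) ?_
  rw [← pow_add, Nat.add_sub_cancel' hmn.le, mul_one, hpow]

end AffineMap

section AffineComp

variable {R : Type*} [CommRing R] [NoZeroDivisors R] {f : R[X]} {r s a b : R}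

theorem ne_zero_of_C_mul_comp_affine_eq (hf : 0 < f.natDegree) (hr : r ≠ 0)
    (h : Polynomial.C s * f.comp (Polynomial.C a * Polynomial.X + Polynomial.C b) =
      Polynomial.C r * f) : a ≠ 0 := by
  rintro rfl
  have hdeg := congrArg Polynomial.natDegree h
  rw [Polynomial.C_0, zero_mul, zero_add, comp_C, ← Polynomial.C_mul, natDegree_C,
    natDegree_C_mul hr] at hdeg
  exact hf.ne hdeg

theorem mul_pow_natDegree_eq_of_C_mul_comp_affine_eq (hf : f ≠ 0) (ha : a ≠ 0)
    (h : Polynomial.C s * f.comp (Polynomial.C a * Polynomial.X + Polynomial.C b) =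
      Polynomial.C r * f) : s * a ^ f.natDegree = r := by
  have hlead := congrArg Polynomial.leadingCoeff h
  rw [leadingCoeff_mul, leadingCoeff_mul, leadingCoeff_C, leadingCoeff_C,
    leadingCoeff_comp (by simp [natDegree_linear ha]), leadingCoeff_linear ha] at hlead
  exact mul_right_cancel₀ (leadingCoeff_ne_zero.2 hf) (by rw [← hlead]; ring)

end AffineComp

section RootSet

variable {K L : Type*} [Field K] [Field L] [Algebra K L] {f : K[X]} {r s a b : K}

theorem natDegree_pos_of_rootSet_nonempty (hf : (f.rootSet L).Nonempty) : 0 < f.natDegree := by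
  obtain ⟨z, hz⟩ := hf
  exact natDegree_pos_of_aeval_root (ne_zero_of_mem_rootSet hz) (aeval_eq_zero_of_mem_rootSet hz)
    ((injective_iff_map_eq_zero _).1 (algebraMap K L).injective)

theorem mapsTo_rootSet_of_C_mul_comp_affine_eq (hs : s ≠ 0)
    (h : Polynomial.C s * f.comp (Polynomial.C a * Polynomial.X + Polynomial.C b) =
      Polynomial.C r * f) :
    (f.rootSet L).MapsTo (fun z ↦ algebraMap K L a * z + algebraMap K L b) (f.rootSet L) := by
  intro z hz
  have heval := congrArg (Polynomial.aeval z) h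
  rw [map_mul, map_mul, aeval_comp, aeval_eq_zero_of_mem_rootSet hz, mul_zero] at heval
  refine (mem_rootSet_of_ne (ne_zero_of_mem_rootSet hz)).2 ?_
  simpa [hs] using heval

theorem isOfFinOrder_div_of_C_mul_comp_affine_eq (hf : (f.rootSet L).Nontrivial) (hr : r ≠ 0)
    (hs : s ≠ 0) (h : Polynomial.C s * f.comp (Polynomial.C a * Polynomial.X + Polynomial.C b) =
      Polynomial.C r * f) : IsOfFinOrder (r / s) := by
  have hdeg := natDegree_pos_of_rootSet_nonempty hf.nonempty
  have ha : a ≠ 0 := ne_zero_of_C_mul_comp_affine_eq hdeg hr h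
  have ha_fin : IsOfFinOrder (algebraMap K L a) :=
    isOfFinOrder_of_mapsTo_affine (f.rootSet_finite L) hf ((_root_.map_ne_zero _).2 ha)
      (mapsTo_rootSet_of_C_mul_comp_affine_eq hs h)
  have hpow : r / s = a ^ f.natDegree := by
    rw [div_eq_iff hs, mul_comm,
      mul_pow_natDegree_eq_of_C_mul_comp_affine_eq (ne_zero_of_natDegree_gt hdeg) ha h]
  rw [hpow]
  exact ((algebraMap K L).injective.isOfFinOrder_iff (f := (algebraMap K L : K →* L)).1 ha_fin).pow

end RootSet

section DegreeOne

theorem eq_sum_C_mul_X_add_C_of_totalDegree_le_one {σ R : Type*} [Fintype σ] [CommSemiring R]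
    {g : MvPolynomial σ R} (hg : g.totalDegree ≤ 1) :
    g = ∑ i, MvPolynomial.C (g.coeff (Finsupp.single i 1)) * MvPolynomial.X i +
      MvPolynomial.C (g.coeff 0) := by
  classical
  ext m
  simp only [MvPolynomial.coeff_add, MvPolynomial.coeff_sum, MvPolynomial.coeff_C_mul,
    MvPolynomial.coeff_X, MvPolynomial.coeff_C]
  obtain hm | hm | hm : m.degree = 0 ∨ m.degree = 1 ∨ 1 < m.degree := by omega
  · obtain rfl := (Finsupp.degree_eq_zero_iff m).1 hm
    simp
  · obtain ⟨j, rfl⟩ := Finsupp.range_single_one.ge hm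
    simp [Finsupp.single_left_inj, eq_comm (a := (0 : σ →₀ ℕ))]
  · have hm0 : 0 ≠ m := by
      rintro rfl
      simp at hm
    have hm1 (i : σ) : Finsupp.single i 1 ≠ m := by
      rintro rfl
      simp at hm
    rw [MvPolynomial.coeff_eq_zero_of_totalDegree_lt (hg.trans_lt hm)]
    simp [hm0, hm1]

variable {K : Type*} [Field K]

theorem exists_aeval_line_eq_zero_of_totalDegree_eq_one {g : MvPolynomial (Fin 2) K}
    (hg : g.totalDegree = 1) :
    (∃ c : K, MvPolynomial.aeval ![Polynomial.C c, Polynomial.X] g = 0) ∨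
      ∃ a b : K, MvPolynomial.aeval
        ![Polynomial.X, Polynomial.C a * Polynomial.X + Polynomial.C b] g = 0 := by
  obtain ⟨α, β, γ, rfl⟩ : ∃ α β γ : K, g = MvPolynomial.C α * MvPolynomial.X 0 +
      MvPolynomial.C β * MvPolynomial.X 1 + MvPolynomial.C γ :=
    ⟨_, _, _, by simpa only [Fin.sum_univ_two] using
      eq_sum_C_mul_X_add_C_of_totalDegree_le_one hg.le⟩
  rcases eq_or_ne β 0 with rfl | hβ
  · have hα : α ≠ 0 := by
      rintro rfl
      simp at hg
    refine Or.inl ⟨-γ / α, ?_⟩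
    simp [← Polynomial.C_mul, mul_div_cancel₀ _ hα]
  · refine Or.inr ⟨-α / β, -γ / β, ?_⟩
    simp [mul_add, ← mul_assoc, ← Polynomial.C_mul, mul_div_cancel₀ _ hβ]

theorem totalDegree_ne_zero_of_irreducible {σ : Type*} {g : MvPolynomial σ K}
    (hg : Irreducible g) : g.totalDegree ≠ 0 := by
  intro h0
  refine hg.not_isUnit (isUnit_iff_totalDegree_of_isReduced.2 ⟨?_, h0⟩)
  refine IsUnit.mk0 _ fun hcoeff ↦ hg.ne_zero ?_
  rw [totalDegree_eq_zero_iff_eq_C.1 h0, hcoeff, MvPolynomial.C_0]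

end DegreeOne

section ScaledDiff

variable {R : Type*} [CommRing R]

/-- The polynomial `s·f(y) − r·f(x)` over an arbitrary commutative ring, with `X 0 = x` and
`X 1 = y`. It extends `Gpoly` to the coefficients for which the proof works. -/
noncomputable def scaledDiff (f : R[X]) (s r : R) : MvPolynomial (Fin 2) R :=
  MvPolynomial.C s * Polynomial.aeval (MvPolynomial.X 1) f -
    MvPolynomial.C r * Polynomial.aeval (MvPolynomial.X 0) f

theorem aeval_scaledDiff (f : R[X]) (s r : R) (p q : R[X]) :
    MvPolynomial.aeval ![p, q] (scaledDiff f s r) =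
      Polynomial.C s * f.comp q - Polynomial.C r * f.comp p := by
  simp [scaledDiff, ← Polynomial.aeval_algHom_apply, Polynomial.comp_eq_aeval]

theorem Gpoly_eq_scaledDiff (f : ℤ[X]) (s r : ℤ) :
    Gpoly f s r = scaledDiff (f.map (algebraMap ℤ ℝ)) s r := by
  simp only [Gpoly, scaledDiff, Polynomial.aeval_map_algebraMap, map_intCast]

theorem aeval_C_X_scaledDiff_ne_zero [NoZeroDivisors R] {f : R[X]} (hf : 0 < f.natDegree) {s : R}
    (hs : s ≠ 0) (r c : R) :
    MvPolynomial.aeval ![Polynomial.C c, Polynomial.X] (scaledDiff f s r) ≠ 0 := by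
  rw [aeval_scaledDiff, comp_X, comp_C, ← Polynomial.C_mul, sub_ne_zero]
  intro h
  have hdeg := congrArg Polynomial.natDegree h
  rw [natDegree_C_mul hs, natDegree_C] at hdeg
  exact hf.ne' hdeg

end ScaledDiff

theorem nonempty_ringHom_algebraicClosure (k M : Type*) [Field k] [Field M] [Algebra k M]
    [IsAlgClosed M] : Nonempty (AlgebraicClosure k →+* M) :=
  ⟨(IsAlgClosed.lift : AlgebraicClosure k →ₐ[k] M).toRingHom⟩

theorem rootSet_nontrivial_of_ringHom {A B : Type*} [Field A] [Field B] [CharZero B] (φ : A →+* B)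
    {f : ℤ[X]} (hf : (f.rootSet A).Nontrivial) : (f.rootSet B).Nontrivial :=
  (hf.image φ.injective).mono (rootSet_mapsTo φ.toIntAlgHom).image_subset

theorem rootSet_map_complex_nontrivial {f : ℤ[X]} (hf : f ≠ 0)
    (hroots : ∃ α β : AlgebraicClosure ℚ, α ≠ β ∧
      Polynomial.aeval α f = 0 ∧ Polynomial.aeval β f = 0) :
    ((f.map (algebraMap ℤ ℝ)).rootSet ℂ).Nontrivial := by
  obtain ⟨α, β, hne, hα, hβ⟩ := hroots
  obtain ⟨φ⟩ := nonempty_ringHom_algebraicClosure ℚ ℂ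
  rw [rootSet, aroots_map, ← rootSet]
  exact rootSet_nontrivial_of_ringHom φ
    ⟨α, (mem_rootSet_of_ne hf).2 hα, β, (mem_rootSet_of_ne hf).2 hβ, hne⟩

theorem not_isOfFinOrder_div_of_pos_of_lt {K : Type*} [Field K] [LinearOrder K]
    [IsStrictOrderedRing K] {r s : K} (hr : 0 < r) (hrs : r < s) : ¬ IsOfFinOrder (r / s) :=
  fun h ↦ ((div_lt_one (hr.trans hrs)).2 hrs).ne (h.eq_one (div_pos hr (hr.trans hrs)).le)

theorem no_linear_factor_over_reals_general {K L : Type*} [Field K] [Field L] [Algebra K L]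
    {f : K[X]} (hf : (f.rootSet L).Nontrivial) {r s : K} (hr : r ≠ 0) (hs : s ≠ 0)
    (hrs : ¬ IsOfFinOrder (r / s)) :
    (∀ g : MvPolynomial (Fin 2) K, g ∣ scaledDiff f s r → g.totalDegree ≠ 1) ∧
      ∀ g : MvPolynomial (Fin 2) K, Irreducible g → g ∣ scaledDiff f s r →
        2 ≤ g.totalDegree := by
  have hlinear (g : MvPolynomial (Fin 2) K) (hdvd : g ∣ scaledDiff f s r) :
      g.totalDegree ≠ 1 := by
    intro hg
    have haeval (x : Fin 2 → K[X]) (hx : MvPolynomial.aeval x g = 0) :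
        MvPolynomial.aeval x (scaledDiff f s r) = 0 := by
      rw [← zero_dvd_iff, ← hx]
      exact _root_.map_dvd _ hdvd
    rcases exists_aeval_line_eq_zero_of_totalDegree_eq_one hg with ⟨c, hline⟩ | ⟨a, b, hline⟩
    · exact aeval_C_X_scaledDiff_ne_zero (natDegree_pos_of_rootSet_nonempty hf.nonempty) hs r c
        (haeval _ hline)
    · have hvanish := haeval _ hline
      rw [aeval_scaledDiff, comp_X, sub_eq_zero] at hvanish
      exact hrs (isOfFinOrder_div_of_C_mul_comp_affine_eq hf hr hs hvanish)
  exact ⟨hlinear, fun g hirr hdvd ↦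
    (Nat.two_le_iff _).2 ⟨totalDegree_ne_zero_of_irreducible hirr, hlinear g hdvd⟩⟩

theorem no_linear_factor_over_reals
    (f : Polynomial ℤ) (hd : 2 ≤ f.natDegree)
    (hroots : ∃ α β : AlgebraicClosure ℚ, α ≠ β ∧
      Polynomial.aeval α f = 0 ∧ Polynomial.aeval β f = 0)
    (r s : ℤ) (hr : 0 < r) (hrs : r < s) :
    (¬ ∃ α β γ : ℝ,
      ¬ (α = 0 ∧ β = 0 ∧ γ = 0) ∧
      (MvPolynomial.C α * MvPolynomial.X 0 + MvPolynomial.C β * MvPolynomial.X 1 +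
        MvPolynomial.C γ : MvPolynomial (Fin 2) ℝ).totalDegree = 1 ∧
      (MvPolynomial.C α * MvPolynomial.X 0 + MvPolynomial.C β * MvPolynomial.X 1 +
        MvPolynomial.C γ) ∣ Gpoly f s r) ∧
    (∀ g : MvPolynomial (Fin 2) ℝ, Irreducible g → g ∣ Gpoly f s r →
      2 ≤ g.totalDegree) := by
  have hr' : (0 : ℝ) < r := Int.cast_pos.2 hr
  have hrs' : (r : ℝ) < s := Int.cast_lt.2 hrs
  obtain ⟨hlinear, hirreducible⟩ := no_linear_factor_over_reals_general
    (rootSet_map_complex_nontrivial (ne_zero_of_natDegree_gt hd) hroots) hr'.ne'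
    (hr'.trans hrs').ne' (not_isOfFinOrder_div_of_pos_of_lt hr' hrs')
  rw [Gpoly_eq_scaledDiff]
  exact ⟨fun ⟨_, _, _, _, hdeg, hdvd⟩ ↦ hlinear _ hdvd hdeg, hirreducible⟩
end
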